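/- arXiv:2008.13676 — 2 statements merged into one kernel-verified Lean document; each statement's English description precedes it below -/
import Mathlib

section
/- Let ω = (ω₀,ω₁,ω₂): S² → S⁴ be a nonconstant, smooth, S¹-equivariant harmonic sphere which is not linearly full. Then exactly one of the following holds: (i) ω₂ ≡ 0 and there exists μ₁ ∈ ℂ∖{0} such that ω(σ₂⁻¹(z)) = ± ω_eq^{(1)}(σ₂⁻¹(μ₁ z)) for all z ∈ ℂ; or (ii) ω₁ ≡ 0 and there exists μ₂ ∈ ℂ∖{0} such that ω(σ₂⁻¹(z)) = ± ω_eq^{(2)}(σ₂⁻¹(μ₂ z²)) for all z ∈ ℂ. In both cases the sign is + if ω(0,0,−1) = (−1,0,0) and − if ω(0,0,−1) = (1,0,0). -/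
noncomputable section

open MeasureTheory
open scoped Classical

abbrev E3 : Type := EuclideanSpace ℝ (Fin 3)

abbrev V5 : Type := ℝ × ℂ × ℂ

/-- Squared Euclidean norm on ℝ ⊕ ℂ ⊕ ℂ. -/
def nsq (p : V5) : ℝ := p.1 ^ 2 + Complex.normSq p.2.1 + Complex.normSq p.2.2

/-- Real inner product on ℝ ⊕ ℂ ⊕ ℂ. -/
def vdot (p q : V5) : ℝ :=
  p.1 * q.1 + (p.2.1 * (starRingEnd ℂ) q.2.1).re + (p.2.2 * (starRingEnd ℂ) q.2.2).re

/-- The circle action R_α · (t, ζ₁, ζ₂) = (t, e^{iα}ζ₁, e^{2iα}ζ₂) on ℝ ⊕ ℂ ⊕ ℂ. -/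
def circAct (α : ℝ) (p : V5) : V5 :=
  (p.1, Complex.exp (Complex.I * (α : ℂ)) * p.2.1,
    Complex.exp (2 * Complex.I * (α : ℂ)) * p.2.2)

/-- Rotation of ℝ³ by angle α about the x₃-axis. -/
def rot3 (α : ℝ) (x : E3) : E3 :=
  EuclideanSpace.single (0 : Fin 3) (Real.cos α * x 0 - Real.sin α * x 1) +
    EuclideanSpace.single (1 : Fin 3) (Real.sin α * x 0 + Real.cos α * x 1) +
    EuclideanSpace.single (2 : Fin 3) (x 2)

/-- The unit sphere S² ⊂ ℝ³. -/
def sphere2 : Set E3 := Metric.sphere (0 : E3) 1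

def northPole : E3 := EuclideanSpace.single (2 : Fin 3) (1 : ℝ)

def southPole : E3 := EuclideanSpace.single (2 : Fin 3) (-1 : ℝ)

/-- Degree-zero homogeneous extension of a map defined on the sphere. -/
def homExt (ω : E3 → V5) : E3 → V5 := fun x => ω (‖x‖⁻¹ • x)

def homExtR (g : E3 → ℝ) : E3 → ℝ := fun x => g (‖x‖⁻¹ • x)

/-- Squared Euclidean norm of the differential. -/
def gradSq (f : E3 → V5) (x : E3) : ℝ :=
  ∑ i : Fin 3, nsq (fderiv ℝ f x (EuclideanSpace.single i (1 : ℝ)))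

def gradSqR (f : E3 → ℝ) (x : E3) : ℝ :=
  ∑ i : Fin 3, fderiv ℝ f x (EuclideanSpace.single i (1 : ℝ)) ^ 2

/-- Componentwise Euclidean Laplacian. -/
def lap (f : E3 → V5) (x : E3) : V5 :=
  ∑ i : Fin 3,
    fderiv ℝ (fun y => fderiv ℝ f y (EuclideanSpace.single i (1 : ℝ))) x
      (EuclideanSpace.single i (1 : ℝ))

/-- ω : S² → S⁴ is a (smooth) harmonic sphere: it maps the sphere into the unit
sphere of ℝ ⊕ ℂ ⊕ ℂ, its degree-zero homogeneous extension Q is smooth away from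
the origin, and ΔQ + |∇Q|²Q = 0 on ℝ³ ∖ {0}. -/
def IsHarmonicSphere (ω : E3 → V5) : Prop :=
  (∀ x ∈ sphere2, nsq (ω x) = 1) ∧
    ContDiffOn ℝ (⊤ : ℕ∞) (homExt ω) {(0 : E3)}ᶜ ∧
    ∀ x : E3, x ≠ 0 → lap (homExt ω) x + gradSq (homExt ω) x • homExt ω x = 0

/-- S¹-equivariance of a sphere map. -/
def EquivariantS (ω : E3 → V5) : Prop :=
  ∀ α : ℝ, ∀ x ∈ sphere2, ω (rot3 α x) = circAct α (ω x)

/-- S¹-equivariance of a vector field on ℝ³. -/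
def EquivariantV (X : E3 → V5) : Prop :=
  ∀ (α : ℝ) (x : E3), X (rot3 α x) = circAct α (X x)

/-- Tangential part X_T = X - (w·X)w. -/
def tangPart (w X : E3 → V5) : E3 → V5 := fun x => X x - vdot (w x) (X x) • w x

/-- Second variation δ²E₀(w)[X] = ∫ (|∇X_T|² - |∇w|²|X_T|²). -/
def secondVar (w X : E3 → V5) : ℝ :=
  ∫ x : E3, (gradSq (tangPart w X) x - gradSq w x * nsq (tangPart w X x))

/-- Stability of a tangent map within the S¹-equivariant class. -/
def IsStable (w : E3 → V5) : Prop :=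
  ∀ X : E3 → V5, ContDiff ℝ (⊤ : ℕ∞) X → HasCompactSupport X → EquivariantV X →
    0 ≤ secondVar w X

def conj' (z : ℂ) : ℂ := (starRingEnd ℂ) z

/-- The twistor fibration, in homogeneous coordinates on ℂ⁴ ∖ {0}. -/
def tau4 (w0 w1 w2 w3 : ℂ) : V5 :=
  ((Complex.normSq w0 + Complex.normSq w3 - Complex.normSq w1 - Complex.normSq w2) /
      (Complex.normSq w0 + Complex.normSq w1 + Complex.normSq w2 + Complex.normSq w3),
    2 * (conj' w0 * w1 + conj' w2 * w3) /
      ((Complex.normSq w0 + Complex.normSq w1 + Complex.normSq w2 + Complex.normSq w3 : ℝ) : ℂ),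
    2 * (conj' w0 * w2 - conj' w1 * w3) /
      ((Complex.normSq w0 + Complex.normSq w1 + Complex.normSq w2 + Complex.normSq w3 : ℝ) : ℂ))

/-- Inverse stereographic projection ℂ → S² (from the south pole). -/
def stInv (z : ℂ) : E3 :=
  EuclideanSpace.single (0 : Fin 3) (2 * z.re / (1 + Complex.normSq z)) +
    EuclideanSpace.single (1 : Fin 3) (2 * z.im / (1 + Complex.normSq z)) +
    EuclideanSpace.single (2 : Fin 3) ((1 - Complex.normSq z) / (1 + Complex.normSq z))

/-- Equatorial embedding ω_eq^{(1)}(x) = (x₃, x₁ + ix₂, 0). -/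
def omegaEq1 (x : E3) : V5 := (x 2, (x 0 : ℂ) + (x 1 : ℂ) * Complex.I, 0)

/-- Equatorial embedding ω_eq^{(2)}(x) = (x₃, 0, x₁ + ix₂). -/
def omegaEq2 (x : E3) : V5 := (x 2, 0, (x 0 : ℂ) + (x 1 : ℂ) * Complex.I)

/-- The horizontal algebraic curve composed with the twistor fibration. -/
def liftCurve (μ1 μ2 z0 z1 : ℂ) : V5 :=
  tau4 (z0 ^ 3) (μ1 * z0 ^ 2 * z1) (μ2 * z0 * z1 ^ 2) (-(μ1 * μ2 / 3) * z1 ^ 3)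

/-- The explicit two-parameter family ω_{μ₁,μ₂} of equivariant harmonic spheres,
as a map defined on S² via the identification [z₀, z₁] ↦ σ₂⁻¹(z₁/z₀). -/
def omegaFam (μ1 μ2 : ℂ) (x : E3) : V5 :=
  if x = southPole then
    if μ1 = 0 ∧ μ2 = 0 then ((1 : ℝ), 0, 0)
    else if μ1 ≠ 0 ∧ μ2 ≠ 0 then liftCurve μ1 μ2 0 1
    else ((-1 : ℝ), 0, 0)
  else liftCurve μ1 μ2 ((1 + x 2 : ℝ) : ℂ) ((x 0 : ℂ) + (x 1 : ℂ) * Complex.I)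

/-- Wirtinger derivative ∂f/∂z̄ = ½(∂_{x₁} + i ∂_{x₂})f. -/
def wd (f : ℂ → ℂ) (z : ℂ) : ℂ :=
  (1 / 2 : ℂ) * (fderiv ℝ f z 1 + Complex.I * fderiv ℝ f z Complex.I)

/-- Surface (2-dimensional Hausdorff) measure on ℝ³. -/
def surf : Measure E3 := Measure.hausdorffMeasure 2


/-- basis vectors -/
def eb (i : Fin 3) : E3 := EuclideanSpace.single i (1 : ℝ)

def cu (r : ℝ) : E3 := (2 * r) • eb 0 + (1 - r ^ 2) • eb 2

def ga (r α : ℝ) : E3 :=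
  (2 * r * Real.cos α) • eb 0 + (2 * r * Real.sin α) • eb 1 + (1 - r ^ 2) • eb 2

def A1 (p : V5) : V5 := (0, Complex.I * p.2.1, 2 * Complex.I * p.2.2)

lemma cu_ne (r : ℝ) : cu r ≠ 0 := by
  intro h
  have h0 := congrArg (fun v : E3 => v 0) h
  have h2 := congrArg (fun v : E3 => v 2) h
  simp [cu, eb] at h0 h2
  subst h0
  simp at h2

lemma ga_ne (r α : ℝ) : ga r α ≠ 0 := by
  intro h
  have h0 := congrArg (fun v : E3 => v 0) h
  have h1 := congrArg (fun v : E3 => v 1) h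
  have h2 := congrArg (fun v : E3 => v 2) h
  simp [ga, eb] at h0 h1 h2
  have := Real.sin_sq_add_cos_sq α
  rcases h0 with h0 | h0
  · subst h0; simp at h2
  · rcases h1 with h1 | h1
    · subst h1; simp at h2
    · rw [h0, h1] at this; norm_num at this

lemma ga_zero (r : ℝ) : ga r 0 = cu r := by
  simp [ga, cu]

lemma circAct_zero (p : V5) : circAct 0 p = p := by
  simp [circAct]

lemma hasDerivAt_cu (r : ℝ) : HasDerivAt cu ((2 : ℝ) • eb 0 + (-2 * r) • eb 2) r := by
  unfold cu
  have h1 : HasDerivAt (fun r : ℝ => 2 * r) 2 r := by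
    simpa using (hasDerivAt_id r).const_mul (2 : ℝ)
  have h2 : HasDerivAt (fun r : ℝ => 1 - r ^ 2) (-2 * r) r := by
    have := ((hasDerivAt_id r).pow 2).const_sub (1 : ℝ)
    refine this.congr_deriv ?_
    simp
  exact (h1.smul_const (eb 0)).add (h2.smul_const (eb 2))

lemma hasDerivAt_cu1 (r : ℝ) :
    HasDerivAt (fun r : ℝ => (2 : ℝ) • eb 0 + (-2 * r) • eb 2) ((-2 : ℝ) • eb 2) r := by
  have h2 : HasDerivAt (fun r : ℝ => -2 * r) (-2) r := by
    simpa using (hasDerivAt_id r).const_mul (-2 : ℝ)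
  exact (h2.smul_const (eb 2)).const_add _

def ga1 (r α : ℝ) : E3 := (-(2 * r * Real.sin α)) • eb 0 + (2 * r * Real.cos α) • eb 1

lemma hasDerivAt_ga (r α : ℝ) : HasDerivAt (ga r) (ga1 r α) α := by
  unfold ga ga1
  have h1 : HasDerivAt (fun α => 2 * r * Real.cos α) (-(2 * r * Real.sin α)) α := by
    have := (Real.hasDerivAt_cos α).const_mul (2 * r)
    refine this.congr_deriv ?_; ring
  have h2 := (Real.hasDerivAt_sin α).const_mul (2 * r)
  exact ((h1.smul_const (eb 0)).add (h2.smul_const (eb 1))).add_const _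

lemma hasDerivAt_ga1 (r : ℝ) : HasDerivAt (ga1 r) ((-(2 * r)) • eb 0) 0 := by
  unfold ga1
  have h1 : HasDerivAt (fun α => -(2 * r * Real.sin α)) (-(2 * r)) 0 := by
    have := ((Real.hasDerivAt_sin 0).const_mul (2 * r)).neg
    refine this.congr_deriv ?_; simp
  have h2 : HasDerivAt (fun α => 2 * r * Real.cos α) 0 0 := by
    have := (Real.hasDerivAt_cos 0).const_mul (2 * r)
    refine this.congr_deriv ?_; simp
  have := ((h1.smul_const (eb 0)).add (h2.smul_const (eb 1)))
  refine this.congr_deriv ?_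
  simp

lemma hasDerivAt_circ (p : V5) (α : ℝ) :
    HasDerivAt (fun α => circAct α p) (A1 (circAct α p)) α := by
  unfold circAct A1
  have h1 : HasDerivAt (fun α : ℝ => Complex.exp (Complex.I * (α : ℂ)))
      (Complex.exp (Complex.I * (α : ℂ)) * Complex.I) α := by
    have h := (Complex.ofRealCLM.hasDerivAt (x := α)).const_mul Complex.I
    simpa using h.cexp
  have h2 : HasDerivAt (fun α : ℝ => Complex.exp (2 * Complex.I * (α : ℂ)))
      (Complex.exp (2 * Complex.I * (α : ℂ)) * (2 * Complex.I)) α := by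
    have h := (Complex.ofRealCLM.hasDerivAt (x := α)).const_mul (2 * Complex.I)
    simpa using h.cexp
  have := (hasDerivAt_const α p.1).prodMk ((h1.mul_const p.2.1).prodMk (h2.mul_const p.2.2))
  convert this using 1
  ext <;> simp <;> ring

lemma hasDerivAt_A1circ (p : V5) :
    HasDerivAt (fun α => A1 (circAct α p)) (A1 (A1 p)) 0 := by
  have h := hasDerivAt_circ (A1 p) 0
  rw [circAct_zero] at h
  convert h using 1
  funext α
  simp only [A1, circAct]
  ext <;> simp <;> ring

lemma nsq_smul (c : ℝ) (p : V5) : nsq (c • p) = c ^ 2 * nsq p := by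
  simp [nsq, Complex.normSq_apply]; ring

lemma key (Q : E3 → V5) (hs : ContDiffOn ℝ (⊤ : ℕ∞) Q {(0 : E3)}ᶜ)
    (hom : ∀ t : ℝ, 0 < t → ∀ x, Q (t • x) = Q x)
    (hrot : ∀ r α, Q (ga r α) = circAct α (Q (cu r)))
    (hlap : ∀ x : E3, x ≠ 0 → lap Q x + gradSq Q x • Q x = 0) :
    ∃ φ1 φ2 : ℝ → V5, ∀ r, HasDerivAt (fun r => Q (cu r)) (φ1 r) r ∧ HasDerivAt φ1 (φ2 r) r ∧
      r ^ 2 • φ2 r + r • φ1 r + A1 (A1 (Q (cu r))) +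
        (r ^ 2 * nsq (φ1 r) + nsq (A1 (Q (cu r)))) • Q (cu r) = 0 := by
  have hca : ∀ x : E3, x ≠ 0 → ContDiffAt ℝ (⊤ : ℕ∞) Q x := fun x hx =>
    hs.contDiffAt (isOpen_compl_singleton.mem_nhds hx)
  have hd : ∀ x : E3, x ≠ 0 → HasFDerivAt Q (fderiv ℝ Q x) x := fun x hx =>
    ((hca x hx).differentiableAt (by simp)).hasFDerivAt
  have hd2 : ∀ x : E3, x ≠ 0 → HasFDerivAt (fderiv ℝ Q) (fderiv ℝ (fderiv ℝ Q) x) x :=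
    fun x hx => (((hca x hx).fderiv_right (m := 1) (by norm_num; exact WithTop.coe_le_coe.2 le_top)).differentiableAt
      (by simp)).hasFDerivAt
  set D := fderiv ℝ Q with hD
  set B := fderiv ℝ D with hB
  have hsymm : ∀ x : E3, x ≠ 0 → ∀ v w, B x v w = B x w v := fun x hx v w =>
    ((hca x hx).isSymmSndFDerivAt (by simp; exact WithTop.coe_le_coe.2 le_top)) v w
  have hchain : ∀ (γ γ1 : ℝ → E3) (γ2 : E3) (t : ℝ), γ t ≠ 0 → HasDerivAt γ (γ1 t) t →
      HasDerivAt γ1 γ2 t →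
      HasDerivAt (fun t => D (γ t) (γ1 t)) (B (γ t) (γ1 t) (γ1 t) + D (γ t) γ2) t := by
    intro γ γ1 γ2 t h0 h1 h2
    exact ((hd2 _ h0).comp_hasDerivAt t h1).clm_apply h2
  have hrad : ∀ x : E3, x ≠ 0 → D x x = 0 := by
    intro x hx
    have h1 : HasDerivAt (fun t : ℝ => t • x) x 1 := by
      simpa using (hasDerivAt_id (1 : ℝ)).smul_const x
    have h2 : HasDerivAt (fun t : ℝ => Q (t • x)) (D x x) 1 := by
      have := hd ((1 : ℝ) • x) (by simpa using hx)
      have := this.comp_hasDerivAt (1 : ℝ) h1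
      rw [one_smul] at this
      exact this
    have h3 : HasDerivAt (fun t : ℝ => Q (t • x)) 0 1 := by
      refine (hasDerivAt_const (1 : ℝ) (Q x)).congr_of_eventuallyEq ?_
      filter_upwards [lt_mem_nhds (show (0 : ℝ) < 1 by norm_num)] with t ht
      exact hom t ht x
    exact h2.unique h3
  have hrad2 : ∀ x : E3, x ≠ 0 → ∀ v, B x v x + D x v = 0 := by
    intro x hx v
    have h1 : HasFDerivAt (fun y => D y y) _ x := (hd2 x hx).clm_apply (hasFDerivAt_id x)
    have h2 : HasFDerivAt (fun y => D y y) (0 : E3 →L[ℝ] V5) x := by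
      refine (hasFDerivAt_const (0 : V5) x).congr_of_eventuallyEq ?_
      filter_upwards [isOpen_compl_singleton.mem_nhds hx] with y hy
      exact hrad y hy
    have := congrArg (fun L : E3 →L[ℝ] V5 => L v) (h1.unique h2)
    simp at this
    rw [add_comm]; exact this
  refine ⟨fun r => D (cu r) ((2 : ℝ) • eb 0 + (-2 * r) • eb 2), fun r =>
    B (cu r) ((2 : ℝ) • eb 0 + (-2 * r) • eb 2) ((2 : ℝ) • eb 0 + (-2 * r) • eb 2) +
      D (cu r) ((-2 : ℝ) • eb 2), fun r => ⟨?_, ?_, ?_⟩⟩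
  · exact (hd _ (cu_ne r)).comp_hasDerivAt r (hasDerivAt_cu r)
  · exact hchain cu _ _ r (cu_ne r) (hasDerivAt_cu r) (hasDerivAt_cu1 r)
  · have hrot1 : ∀ α, D (ga r α) (ga1 r α) = A1 (circAct α (Q (cu r))) := by
      intro α
      have h1 := (hd _ (ga_ne r α)).comp_hasDerivAt α (hasDerivAt_ga r α)
      have h2 := hasDerivAt_circ (Q (cu r)) α
      have h3 : (Q ∘ ga r) = fun α => circAct α (Q (cu r)) := funext (hrot r)
      rw [h3] at h1
      exact h1.unique h2
    have hrot2 : B (cu r) (ga1 r 0) (ga1 r 0) + D (cu r) ((-(2 * r)) • eb 0)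
        = A1 (A1 (Q (cu r))) := by
      have h1 := hchain (ga r) (ga1 r) _ 0 (ga_ne r 0) (hasDerivAt_ga r 0) (hasDerivAt_ga1 r)
      have h2 := hasDerivAt_A1circ (Q (cu r))
      have h3 : (fun α => D (ga r α) (ga1 r α)) = fun α => A1 (circAct α (Q (cu r))) :=
        funext hrot1
      rw [h3, ga_zero] at h1
      exact h1.unique h2
    have hg0 : ga1 r 0 = (2 * r) • eb 1 := by simp [ga1]
    have hrot1' := hrot1 0
    rw [circAct_zero, ga_zero, hg0] at hrot1'
    rw [hg0] at hrot2
    have hx := cu_ne r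
    have hL := hlap (cu r) hx
    have hlapB : lap Q (cu r) = B (cu r) (eb 0) (eb 0) + B (cu r) (eb 1) (eb 1)
        + B (cu r) (eb 2) (eb 2) := by
      have : ∀ i, fderiv ℝ (fun y => fderiv ℝ Q y (EuclideanSpace.single i (1 : ℝ))) (cu r)
          (EuclideanSpace.single i (1 : ℝ)) = B (cu r) (eb i) (eb i) := by
        intro i
        have h1 : HasFDerivAt (fun y => D y (eb i)) _ (cu r) :=
          (hd2 (cu r) hx).clm_apply (hasFDerivAt_const (eb i) (cu r))
        have h2 := h1.fderiv
        change (fderiv ℝ (fun y => D y (eb i)) (cu r)) (eb i) = _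
        rw [h2]; simp
      unfold lap
      rw [Fin.sum_univ_three, this, this, this]
    have hgr : gradSq Q (cu r) = nsq (D (cu r) (eb 0)) + nsq (D (cu r) (eb 1))
        + nsq (D (cu r) (eb 2)) := by
      unfold gradSq
      rw [Fin.sum_univ_three]; rfl
    have ha := hrad _ hx
    have hb2 := hrad2 _ hx (eb 2)
    have hsy := hsymm _ hx (eb 2) (eb 0)
    rw [hlapB, hgr] at hL
    have hcu : cu r = (2 * r) • eb 0 + (1 - r ^ 2) • eb 2 := rfl
    beta_reduce
    generalize hp : cu r = p at *
    have ha : D p ((2 * r) • eb 0 + (1 - r ^ 2) • eb 2) = 0 := by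
      rw [← hcu]; exact ha
    have hb2' : B p (eb 2) ((2 * r) • eb 0 + (1 - r ^ 2) • eb 2) + D p (eb 2) = 0 := by
      rw [← hcu]; exact hb2
    simp only [map_add, map_smul, add_apply,
      smul_apply] at ha hb2' hrot1' hrot2 ⊢
    rw [hsy] at hb2' ⊢
    generalize D p (eb 0) = d0 at *
    generalize D p (eb 1) = d1 at *
    generalize D p (eb 2) = d2 at *
    generalize B p (eb 0) (eb 0) = B00 at *
    generalize B p (eb 1) (eb 1) = B11 at *
    generalize B p (eb 2) (eb 2) = B22 at *
    generalize B p (eb 0) (eb 2) = B02 at *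
    have hE : r ^ 2 * nsq ((2 : ℝ) • d0 + (-2 * r) • d2) + nsq (A1 (Q p))
        = 4 * r ^ 2 * (nsq d0 + nsq d1 + nsq d2) := by
      rw [← hrot1', nsq_smul]
      obtain ⟨t0, u0, v0⟩ := d0
      obtain ⟨t2, u2, v2⟩ := d2
      generalize hq : 1 - r ^ 2 = q at ha
      simp only [Prod.smul_mk, Prod.mk_add_mk, Prod.mk_eq_zero, smul_eq_mul, Complex.ext_iff] at ha
      simp at ha
      simp [nsq, Complex.normSq_apply]
      obtain ⟨h1, ⟨h2, h3⟩, h4, h5⟩ := ha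
      linear_combination (-4 * r ^ 2) * (t2 * h1 + u2.re * h2 + u2.im * h3 + v2.re * h4 + v2.im * h5) - 4 * r ^ 2 * (t2 ^ 2 + u2.re ^ 2 + u2.im ^ 2 + v2.re ^ 2 + v2.im ^ 2) * hq
    rw [hE, ← hrot2]
    have e1 := congrArg (fun v : V5 => (4 * r ^ 2 : ℝ) • v) hL
    have e2 := congrArg (fun v : V5 => (4 * r ^ 2 : ℝ) • v) hb2'
    beta_reduce at e1 e2
    rw [smul_zero] at e1 e2
    rw [← sub_zero (0 : V5)]
    nth_rewrite 1 [← e1]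
    rw [← e2]
    module

lemma lin_zero (Z Z1 w : ℝ → ℝ) (K : NNReal) (hZ : ∀ r, 0 < r → HasDerivAt Z (Z1 r) r)
    (hw : ∀ r, 0 < r → |w r| ≤ K) (hode : ∀ r, 0 < r → r * Z1 r = w r * Z r)
    (r0 : ℝ) (hr0 : 0 < r0) (h0 : Z r0 = 0) : ∀ r, 0 < r → Z r = 0 := by
  have h := ODE_solution_unique_univ (v := fun t x => w (Real.exp t) * x) (s := fun _ => Set.univ)
    (K := K) (f := fun t => Z (Real.exp t)) (g := fun _ => (0 : ℝ)) (t₀ := Real.log r0)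
    (by
      intro t
      apply LipschitzWith.lipschitzOnWith
      apply LipschitzWith.of_dist_le_mul
      intro x y
      rw [Real.dist_eq, Real.dist_eq, ← mul_sub, abs_mul]
      exact mul_le_mul_of_nonneg_right (hw _ (Real.exp_pos t)) (abs_nonneg _))
    (by
      intro t
      refine ⟨?_, trivial⟩
      have := (hZ _ (Real.exp_pos t)).comp t (Real.hasDerivAt_exp t)
      refine this.congr_deriv ?_
      rw [mul_comm (Z1 _), hode _ (Real.exp_pos t)])
    (by
      intro t
      refine ⟨?_, trivial⟩
      simpa using hasDerivAt_const t (0 : ℝ))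
    (by simp [Real.exp_log hr0, h0])
  intro r hr
  have := congrFun h (Real.log r)
  simpa [Real.exp_log hr] using this

/-- the case `r h' = -k (1-h^2)` -/
lemma solve_plus (k : ℕ) (h a b h1 a1 b1 : ℝ → ℝ)
    (dh : ∀ r, HasDerivAt h (h1 r) r) (da : ∀ r, HasDerivAt a (a1 r) r)
    (db : ∀ r, HasDerivAt b (b1 r) r)
    (hn : ∀ r, h r ^ 2 + a r ^ 2 + b r ^ 2 = 1)
    (eh : ∀ r, 0 < r → r * h1 r = -k * (1 - h r ^ 2))
    (ea : ∀ r, 0 < r → r * a1 r = k * h r * a r)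
    (eb' : ∀ r, 0 < r → r * b1 r = k * h r * b r) :
    ∃ ε α β : ℝ, (ε = 1 ∨ ε = -1) ∧ ∀ r, 0 < r →
      h r = ε * ((1 - (α ^ 2 + β ^ 2) * r ^ (2 * k)) / (1 + (α ^ 2 + β ^ 2) * r ^ (2 * k))) ∧
      a r = ε * (2 * (α * r ^ k) / (1 + (α ^ 2 + β ^ 2) * r ^ (2 * k))) ∧
      b r = ε * (2 * (β * r ^ k) / (1 + (α ^ 2 + β ^ 2) * r ^ (2 * k))) := by
  have hle : ∀ r, |h r| ≤ 1 := fun r => by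
    rw [← sq_le_one_iff_abs_le_one]; nlinarith [hn r, sq_nonneg (a r), sq_nonneg (b r)]
  by_cases hP : ∃ r0, 0 < r0 ∧ 1 + h r0 = 0
  · obtain ⟨r0, hr0, hz⟩ := hP
    have := lin_zero (fun r => 1 + h r) h1 (fun r => -k * (1 - h r)) (2 * k)
      (fun r _ => (dh r).const_add 1)
      (fun r _ => by
        rw [abs_mul]
        have h3 : |1 - h r| ≤ 2 := by
          have := abs_le.1 (hle r); rw [abs_le]; constructor <;> linarith
        simp
        nlinarith [(Nat.cast_nonneg k : (0 : ℝ) ≤ k)])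
      (fun r hr => by rw [eh r hr]; ring) r0 hr0 hz
    refine ⟨-1, 0, 0, Or.inr rfl, fun r hr => ?_⟩
    have hh : h r = -1 := by linarith [this r hr]
    have h2 := hn r
    rw [hh] at h2
    have ha0 : a r = 0 := by nlinarith [sq_nonneg (a r), sq_nonneg (b r)]
    have hb0 : b r = 0 := by nlinarith [sq_nonneg (a r), sq_nonneg (b r)]
    simp [hh, ha0, hb0]
  · push Not at hP
    have gen : ∀ (c c1 : ℝ → ℝ), (∀ r, HasDerivAt c (c1 r) r) →
        (∀ r, 0 < r → r * c1 r = k * h r * c r) →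
        ∀ r, 0 < r → c r = c 1 / (1 + h 1) * (r ^ k * (1 + h r)) := by
      intro c c1 dc ec r hr
      have h1ne := hP 1 one_pos
      have := lin_zero (fun r => c r - c 1 / (1 + h 1) * (r ^ k * (1 + h r)))
        (fun r => c1 r - c 1 / (1 + h 1) * (k * r ^ (k - 1) * (1 + h r) + r ^ k * h1 r))
        (fun r => k * h r) k
        (fun r _ => by
          have := (dc r).sub (((hasDerivAt_pow k r).mul ((dh r).const_add 1)).const_mul
            (c 1 / (1 + h 1)))
          exact this)
        (fun r _ => by
          rw [abs_mul]
          simp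
          nlinarith [(Nat.cast_nonneg k : (0 : ℝ) ≤ k), hle r])
        (fun r hr => by
          have e1 := ec r hr
          have e2 := eh r hr
          have e3 : r * (k * r ^ (k - 1)) = k * r ^ k := by
            rcases k with _ | k
            · simp
            · simp [pow_succ]; ring
          linear_combination e1 - c 1 / (1 + h 1) * (1 + h r) * e3 - c 1 / (1 + h 1) * r ^ k * e2)
        1 one_pos (by simp; field_simp; ring) r hr
      simpa [sub_eq_zero] using this
    refine ⟨1, a 1 / (1 + h 1), b 1 / (1 + h 1), Or.inl rfl, fun r hr => ?_⟩
    have ga' := gen a a1 da ea r hr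
    have gb' := gen b b1 db eb' r hr
    generalize a 1 / (1 + h 1) = α at *
    generalize b 1 / (1 + h 1) = β at *
    have hp := hP r hr
    have hm : (α ^ 2 + β ^ 2) * r ^ (2 * k) * (1 + h r) = 1 - h r := by
      have := hn r
      rw [ga', gb'] at this
      apply mul_left_cancel₀ hp
      rw [mul_comm 2 k, pow_mul]
      linear_combination this
    rw [ga', gb']
    have hpos : 0 < 1 + (α ^ 2 + β ^ 2) * r ^ (2 * k) := by positivity
    generalize (α ^ 2 + β ^ 2) * r ^ (2 * k) = m at *
    refine ⟨?_, ?_, ?_⟩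
    · field_simp; linear_combination hm
    · field_simp; linear_combination (α) * hm
    · field_simp; linear_combination (β) * hm

lemma solve_ode (k : ℕ) (hk : 0 < k) (h a b h1 a1 b1 h2 a2 b2 : ℝ → ℝ)
    (dh : ∀ r, HasDerivAt h (h1 r) r) (da : ∀ r, HasDerivAt a (a1 r) r)
    (db : ∀ r, HasDerivAt b (b1 r) r)
    (dh1 : ∀ r, HasDerivAt h1 (h2 r) r) (da1 : ∀ r, HasDerivAt a1 (a2 r) r)
    (db1 : ∀ r, HasDerivAt b1 (b2 r) r)
    (hn : ∀ r, h r ^ 2 + a r ^ 2 + b r ^ 2 = 1) (ha0 : a 0 = 0) (hb0 : b 0 = 0)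
    (E : ℝ → ℝ) (hE : ∀ r, E r = r ^ 2 * (h1 r ^ 2 + a1 r ^ 2 + b1 r ^ 2)
      + (k : ℝ) ^ 2 * (a r ^ 2 + b r ^ 2))
    (oh : ∀ r, r ^ 2 * h2 r + r * h1 r + E r * h r = 0)
    (oa : ∀ r, r ^ 2 * a2 r + r * a1 r - (k : ℝ) ^ 2 * a r + E r * a r = 0)
    (ob : ∀ r, r ^ 2 * b2 r + r * b1 r - (k : ℝ) ^ 2 * b r + E r * b r = 0) :
    ∃ ε α β : ℝ, (ε = 1 ∨ ε = -1) ∧ ∀ r, 0 < r →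
      h r = ε * ((1 - (α ^ 2 + β ^ 2) * r ^ (2 * k)) / (1 + (α ^ 2 + β ^ 2) * r ^ (2 * k))) ∧
      a r = ε * (2 * (α * r ^ k) / (1 + (α ^ 2 + β ^ 2) * r ^ (2 * k))) ∧
      b r = ε * (2 * (β * r ^ k) / (1 + (α ^ 2 + β ^ 2) * r ^ (2 * k))) := by
  have hk' : (0 : ℝ) < k := by exact_mod_cast hk
  have hle : ∀ r, |h r| ≤ 1 := fun r => by
    rw [← sq_le_one_iff_abs_le_one]; nlinarith [hn r, sq_nonneg (a r), sq_nonneg (b r)]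
  have hn1 : ∀ r, h r * h1 r + a r * a1 r + b r * b1 r = 0 := by
    intro r
    have e1 := (((dh r).pow 2).add ((da r).pow 2)).add ((db r).pow 2)
    have e2 : HasDerivAt (fun r => h r ^ 2 + a r ^ 2 + b r ^ 2) 0 r := by
      simp_rw [hn]; exact hasDerivAt_const r 1
    have := e1.unique e2
    simp at this
    linarith
  have hHopf : ∀ r, r ^ 2 * (h1 r ^ 2 + a1 r ^ 2 + b1 r ^ 2) - (k : ℝ) ^ 2 * (a r ^ 2 + b r ^ 2)
      = 0 := by
    have hder : ∀ r, HasDerivAt (fun r => r ^ 2 * (h1 r ^ 2 + a1 r ^ 2 + b1 r ^ 2)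
        - (k : ℝ) ^ 2 * (a r ^ 2 + b r ^ 2)) 0 r := by
      intro r
      have e1 := (((hasDerivAt_id r).pow 2).mul
        ((((dh1 r).pow 2).add ((da1 r).pow 2)).add ((db1 r).pow 2))).sub
        ((((da r).pow 2).add ((db r).pow 2)).const_mul ((k : ℝ) ^ 2))
      refine e1.congr_deriv ?_
      simp
      linear_combination 2 * h1 r * oh r + 2 * a1 r * oa r + 2 * b1 r * ob r - 2 * E r * hn1 r
    intro r
    have := is_const_of_deriv_eq_zero (fun r => (hder r).differentiableAt)
      (fun r => (hder r).deriv) r 0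
    rw [this]; simp [ha0, hb0]
  have hMom : ∀ r, r * (a r * b1 r - b r * a1 r) = 0 := by
    have hder : ∀ r, HasDerivAt (fun r => (r * (a r * b1 r - b r * a1 r)) ^ 2) 0 r := by
      intro r
      have e1 := ((hasDerivAt_id r).mul (((da r).mul (db1 r)).sub ((db r).mul (da1 r)))).pow 2
      refine e1.congr_deriv ?_
      simp only [Nat.cast_ofNat, id, Pi.mul_apply, Pi.sub_apply]
      norm_num only [pow_one]
      linear_combination (2 * (a r * b1 r - b r * a1 r)) * (a r * ob r - b r * oa r)
    intro r
    have := is_const_of_deriv_eq_zero (fun r => (hder r).differentiableAt)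
      (fun r => (hder r).deriv) r 0
    simp only [zero_mul] at this
    exact pow_eq_zero_iff (two_ne_zero) |>.1 (by rw [this]; norm_num)
  have hprod : ∀ r, (r * h1 r - k * (1 - h r ^ 2)) * (r * h1 r + k * (1 - h r ^ 2)) = 0 := by
    intro r
    have e1 := hHopf r
    have e2 := hMom r
    have e3 := hn1 r
    have e4 := hn r
    have s : a r ^ 2 + b r ^ 2 = 1 - h r ^ 2 := by linarith
    have l : (a r ^ 2 + b r ^ 2) * (r ^ 2 * (a1 r ^ 2 + b1 r ^ 2)) = r ^ 2 * (h r * h1 r) ^ 2 := by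
      linear_combination (r * (a r * b1 r - b r * a1 r)) * e2
        + r ^ 2 * (a r * a1 r + b r * b1 r - h r * h1 r) * e3
    have e5 : r ^ 2 * (a1 r ^ 2 + b1 r ^ 2) = (k : ℝ) ^ 2 * (1 - h r ^ 2) - r ^ 2 * h1 r ^ 2 := by
      rw [← s]; linear_combination e1
    rw [s, e5] at l
    linear_combination -l
  -- the first-order equations for a, b
  have hab : ∀ r (σ : ℝ), σ ^ 2 = 1 → r * h1 r = - σ * k * (1 - h r ^ 2) →
      r * a1 r = σ * k * h r * a r ∧ r * b1 r = σ * k * h r * b r := by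
    intro r σ hσ hh
    have e1 := hHopf r
    have e2 := hMom r
    have e3 := hn1 r
    have e4 := hn r
    by_cases hz : a r ^ 2 + b r ^ 2 = 0
    · have ha : a r = 0 := by nlinarith [sq_nonneg (a r), sq_nonneg (b r)]
      have hb : b r = 0 := by nlinarith [sq_nonneg (a r), sq_nonneg (b r)]
      rw [hz] at e1
      have q : (r * h1 r) ^ 2 + (r * a1 r) ^ 2 + (r * b1 r) ^ 2 = 0 := by linear_combination e1
      have qa : r * a1 r = 0 := by
        nlinarith [sq_nonneg (r * h1 r), sq_nonneg (r * a1 r), sq_nonneg (r * b1 r)]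
      have qb : r * b1 r = 0 := by
        nlinarith [sq_nonneg (r * h1 r), sq_nonneg (r * a1 r), sq_nonneg (r * b1 r)]
      rw [ha, hb, qa, qb]; simp
    · constructor
      · apply mul_left_cancel₀ hz
        linear_combination (r * a r) * e3 - b r * e2 - a r * h r * hh
          - a r * h r * σ * k * e4
      · apply mul_left_cancel₀ hz
        linear_combination (r * b r) * e3 + a r * e2 - b r * h r * hh
          - b r * h r * σ * k * e4
  have hEval : ∀ r, E r = 2 * (k : ℝ) ^ 2 * (1 - h r ^ 2) := by
    intro r
    linear_combination hE r + hHopf r + 2 * (k : ℝ) ^ 2 * hn r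
  have dFm : ∀ r, HasDerivAt (fun r => r * h1 r - k * (1 - h r ^ 2))
      (h1 r + r * h2 r + k * (2 * h r * h1 r)) r := by
    intro r
    have e1 := ((hasDerivAt_id r).mul (dh1 r)).sub ((((dh r).pow 2).const_sub 1).const_mul (k : ℝ))
    refine e1.congr_deriv ?_
    simp
  by_cases hF : ∃ r0, 0 < r0 ∧ r0 * h1 r0 - k * (1 - h r0 ^ 2) = 0
  · obtain ⟨r0, hr0, hz⟩ := hF
    have hFz := lin_zero _ _ (fun r => 2 * k * h r) (2 * k) (fun r _ => dFm r)
      (fun r _ => by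
        rw [abs_mul]
        simp
        nlinarith [hle r])
      (fun r hr => by
        have := oh r
        rw [hEval] at this
        linear_combination this) r0 hr0 hz
    obtain ⟨ε, α, β, hε, hs⟩ := solve_plus k (fun r => -h r) (fun r => -a r) (fun r => -b r)
      (fun r => -h1 r) (fun r => -a1 r) (fun r => -b1 r)
      (fun r => (dh r).neg) (fun r => (da r).neg) (fun r => (db r).neg)
      (fun r => by simpa using hn r)
      (fun r hr => by have := hFz r hr; linear_combination -this)
      (fun r hr => by
        have := (hab r (-1) (by norm_num) (by have := hFz r hr; linear_combination this)).1
        linear_combination -this)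
      (fun r hr => by
        have := (hab r (-1) (by norm_num) (by have := hFz r hr; linear_combination this)).2
        linear_combination -this)
    refine ⟨-ε, α, β, ?_, fun r hr => ?_⟩
    · rcases hε with rfl | rfl <;> simp
    · obtain ⟨q1, q2, q3⟩ := hs r hr
      refine ⟨?_, ?_, ?_⟩
      · linear_combination -q1
      · linear_combination -q2
      · linear_combination -q3
  · push Not at hF
    have hFp : ∀ r, 0 < r → r * h1 r = -k * (1 - h r ^ 2) := by
      intro r hr
      have := (mul_eq_zero.1 (hprod r)).resolve_left (hF r hr)
      linear_combination this
    exact solve_plus k h a b h1 a1 b1 dh da db hn hFp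
      (fun r hr => by
        have := (hab r 1 (by norm_num) (by rw [hFp r hr]; ring)).1
        linear_combination this)
      (fun r hr => by
        have := (hab r 1 (by norm_num) (by rw [hFp r hr]; ring)).2
        linear_combination this)

lemma stInv_0 (z : ℂ) : stInv z 0 = 2 * z.re / (1 + Complex.normSq z) := by
  simp [stInv]

lemma stInv_1 (z : ℂ) : stInv z 1 = 2 * z.im / (1 + Complex.normSq z) := by
  simp [stInv]

lemma stInv_2 (z : ℂ) : stInv z 2 = (1 - Complex.normSq z) / (1 + Complex.normSq z) := by
  simp [stInv]

lemma rot3_0 (α : ℝ) (x : E3) : rot3 α x 0 = Real.cos α * x 0 - Real.sin α * x 1 := by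
  simp [rot3]

lemma rot3_1 (α : ℝ) (x : E3) : rot3 α x 1 = Real.sin α * x 0 + Real.cos α * x 1 := by
  simp [rot3]

lemma rot3_2 (α : ℝ) (x : E3) : rot3 α x 2 = x 2 := by
  simp [rot3]

lemma e3_ext {x y : E3} (h0 : x 0 = y 0) (h1 : x 1 = y 1) (h2 : x 2 = y 2) : x = y := by
  ext i
  fin_cases i
  · exact h0
  · exact h1
  · exact h2

lemma mem_sphere2 (x : E3) : x ∈ sphere2 ↔ x 0 ^ 2 + x 1 ^ 2 + x 2 ^ 2 = 1 := by
  unfold sphere2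
  rw [mem_sphere_zero_iff_norm, EuclideanSpace.norm_eq, Fin.sum_univ_three, Real.sqrt_eq_one]
  simp

lemma den_pos (z : ℂ) : 0 < 1 + Complex.normSq z := by
  have := Complex.normSq_nonneg z; linarith

lemma stInv_mem (z : ℂ) : stInv z ∈ sphere2 := by
  rw [mem_sphere2, stInv_0, stInv_1, stInv_2]
  have := den_pos z
  field_simp
  rw [Complex.normSq_apply]; ring

lemma south_mem : southPole ∈ sphere2 := by
  rw [mem_sphere2]; simp [southPole]

lemma exists_stInv (x : E3) (hx : x ∈ sphere2) (hs : x ≠ southPole) : ∃ z, x = stInv z := by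
  rw [mem_sphere2] at hx
  have h2 : 1 + x 2 ≠ 0 := by
    intro h
    apply hs
    have h3 : x 2 = -1 := by linarith
    rw [h3] at hx
    have h0 : x 0 = 0 := by nlinarith [sq_nonneg (x 0), sq_nonneg (x 1)]
    have h1 : x 1 = 0 := by nlinarith [sq_nonneg (x 0), sq_nonneg (x 1)]
    apply e3_ext <;> simp [southPole, h0, h1, h3]
  have hn : Complex.normSq ⟨x 0 / (1 + x 2), x 1 / (1 + x 2)⟩ = (1 - x 2) / (1 + x 2) := by
    rw [Complex.normSq_mk]; field_simp; linear_combination hx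
  have hd : 1 + (1 - x 2) / (1 + x 2) = 2 / (1 + x 2) := by field_simp; ring
  refine ⟨⟨x 0 / (1 + x 2), x 1 / (1 + x 2)⟩, e3_ext ?_ ?_ ?_⟩
  · rw [stInv_0, hn, hd]; field_simp
  · rw [stInv_1, hn, hd]; field_simp
  · rw [stInv_2, hn, hd]; field_simp; ring

lemma norm_ga (r α : ℝ) : ‖ga r α‖ = 1 + r ^ 2 := by
  rw [EuclideanSpace.norm_eq, Fin.sum_univ_three, Real.sqrt_eq_iff_mul_self_eq (by positivity)
    (by positivity)]
  simp only [Real.norm_eq_abs, sq_abs]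
  simp [ga, eb]
  linear_combination (4 * r ^ 2) * Real.sin_sq_add_cos_sq α

lemma norm_cu (r : ℝ) : ‖cu r‖ = 1 + r ^ 2 := by
  rw [← ga_zero, norm_ga]

lemma cu_stInv (r : ℝ) : ‖cu r‖⁻¹ • cu r = stInv r := by
  rw [norm_cu]
  apply e3_ext
  · rw [stInv_0]; simp [cu, eb, Complex.normSq_apply]; ring
  · rw [stInv_1]; simp [cu, eb]
  · rw [stInv_2]; simp [cu, eb, Complex.normSq_apply]; ring

lemma homExt_cu (ω : E3 → V5) (r : ℝ) : homExt ω (cu r) = ω (stInv r) := by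
  unfold homExt
  rw [cu_stInv]

lemma ga_rot (r α : ℝ) : ‖ga r α‖⁻¹ • ga r α = rot3 α (stInv r) := by
  rw [norm_ga]
  apply e3_ext
  · rw [rot3_0, stInv_0, stInv_1]; simp [ga, eb, Complex.normSq_apply]; ring
  · rw [rot3_1, stInv_0, stInv_1]; simp [ga, eb, Complex.normSq_apply]; ring
  · rw [rot3_2, stInv_2]; simp [ga, eb, Complex.normSq_apply]; ring

lemma rot_stInv (r α : ℝ) : rot3 α (stInv r) = stInv (r * Complex.exp (Complex.I * α)) := by
  have hn : Complex.normSq (r * Complex.exp (Complex.I * α)) = Complex.normSq (r : ℂ) := by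
    rw [Complex.normSq_mul, Complex.normSq_eq_norm_sq (Complex.exp _), mul_comm Complex.I,
      Complex.norm_exp_ofReal_mul_I]
    simp
  have hr : ((r : ℂ) * Complex.exp (Complex.I * α)).re = r * Real.cos α := by
    rw [mul_comm Complex.I, Complex.re_ofReal_mul, Complex.exp_ofReal_mul_I_re]
  have hi : ((r : ℂ) * Complex.exp (Complex.I * α)).im = r * Real.sin α := by
    rw [mul_comm Complex.I, Complex.im_ofReal_mul, Complex.exp_ofReal_mul_I_im]
  apply e3_ext
  · rw [rot3_0, stInv_0, stInv_1, stInv_0, hn, hr]; simp; ring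
  · rw [rot3_1, stInv_0, stInv_1, stInv_1, hn, hi]; simp; ring
  · rw [rot3_2, stInv_2, stInv_2, hn]

lemma eq_at_zero {f g : ℝ → ℝ} (hf : ContinuousAt f 0) (hg : ContinuousAt g 0)
    (h : ∀ r, 0 < r → f r = g r) : f 0 = g 0 := by
  have h1 : Filter.Tendsto f (nhdsWithin 0 (Set.Ioi 0)) (nhds (f 0)) :=
    hf.tendsto.mono_left nhdsWithin_le_nhds
  have h2 : Filter.Tendsto g (nhdsWithin 0 (Set.Ioi 0)) (nhds (g 0)) :=
    hg.tendsto.mono_left nhdsWithin_le_nhds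
  refine tendsto_nhds_unique (h1.congr' ?_) h2
  filter_upwards [self_mem_nhdsWithin] with r hr
  exact h r hr

lemma pole_val (ω : E3 → V5) (heq : EquivariantS ω) (x : E3) (hx : x ∈ sphere2)
    (h0 : x 0 = 0) (h1 : x 1 = 0) : (ω x).2.1 = 0 ∧ (ω x).2.2 = 0 := by
  have hr : ∀ α, rot3 α x = x := fun α => by
    apply e3_ext
    · rw [rot3_0, h0, h1]; simp
    · rw [rot3_1, h0, h1]; simp
    · rw [rot3_2]
  constructor
  · have h := heq Real.pi x hx
    rw [hr] at h
    have h' := congrArg (fun p : V5 => p.2.1) h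
    simp only [circAct] at h'
    rw [mul_comm Complex.I, Complex.exp_pi_mul_I] at h'
    have h2 : 2 * (ω x).2.1 = 0 := by linear_combination h'
    simpa using h2
  · have h := heq (Real.pi / 2) x hx
    rw [hr] at h
    have h' := congrArg (fun p : V5 => p.2.2) h
    simp only [circAct] at h'
    have : 2 * Complex.I * ((Real.pi / 2 : ℝ) : ℂ) = Real.pi * Complex.I := by
      push_cast; ring
    rw [this, Complex.exp_pi_mul_I] at h'
    have h2 : 2 * (ω x).2.2 = 0 := by linear_combination h'
    simpa using h2

lemma pole_first {p : V5} {t : ℝ} (h : nsq p = 1) (ht : t = 1 ∨ t = -1) (hp : p.1 = t) :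
    p = (t, 0, 0) := by
  obtain ⟨a, b, c⟩ := p
  simp only [nsq] at h hp
  subst hp
  have ha : a ^ 2 = 1 := by rcases ht with rfl | rfl <;> norm_num
  have hb := Complex.normSq_nonneg b
  have hc := Complex.normSq_nonneg c
  have hb0 : Complex.normSq b = 0 := by linarith
  have hc0 : Complex.normSq c = 0 := by linarith
  rw [Complex.normSq_eq_zero] at hb0 hc0
  rw [hb0, hc0]

lemma fin_lemma (ω : E3 → V5) (hH : IsHarmonicSphere ω) (heq : EquivariantS ω)
    (hnc : ∃ x ∈ sphere2, ∃ y ∈ sphere2, ω x ≠ ω y) (k : ℕ) (hk : 0 < k)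
    (L L' : V5 →L[ℝ] ℂ) (c : ℂ) (hnsq : ∀ p, nsq p = p.1 ^ 2 + Complex.normSq (L p)
      + Complex.normSq (L' p))
    (hLA : ∀ p, L (A1 p) = k * Complex.I * L p) (hLA' : ∀ p, L' (A1 p) = c * L' p)
    (hLc : ∀ α p, L (circAct α p) = Complex.exp (Complex.I * (α : ℝ)) ^ k * L p)
    (hL' : ∀ x ∈ sphere2, L' (ω x) = 0)
    (hL0 : ∀ p : V5, p.2.1 = 0 → p.2.2 = 0 → L p = 0) :
    ∃ (ε : ℝ) (μ : ℂ), (ε = 1 ∨ ε = -1) ∧ μ ≠ 0 ∧ ω southPole = (-ε, 0, 0) ∧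
      ∀ z : ℂ, (ω (stInv z)).1 = ε * ((1 - Complex.normSq (μ * z ^ k)) /
          (1 + Complex.normSq (μ * z ^ k))) ∧
        L (ω (stInv z)) = ε * (2 * (μ * z ^ k) / (1 + Complex.normSq (μ * z ^ k) : ℝ)) := by
  obtain ⟨hS, hs, hlap⟩ := hH
  have hom : ∀ t : ℝ, 0 < t → ∀ x, homExt ω (t • x) = homExt ω x := by
    intro t ht x
    unfold homExt
    congr 1
    rw [norm_smul, Real.norm_of_nonneg ht.le, smul_smul, mul_inv]
    congr 1
    field_simp
  have hrot : ∀ r α, homExt ω (ga r α) = circAct α (homExt ω (cu r)) := by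
    intro r α
    rw [homExt_cu]
    unfold homExt
    rw [ga_rot, heq α _ (stInv_mem _)]
  obtain ⟨φ1, φ2, hφ⟩ := key (homExt ω) hs hom hrot hlap
  simp only [homExt_cu] at hφ
  have d0 := fun r => (hφ r).1
  have d1 := fun r => (hφ r).2.1
  have ode := fun r => (hφ r).2.2
  have hL'1 : ∀ r, L' (φ1 r) = 0 := by
    intro r
    have e1 := L'.hasFDerivAt.comp_hasDerivAt r (d0 r)
    have e2 : (L' ∘ fun r : ℝ => ω (stInv r)) = fun _ => 0 := by
      funext r; exact hL' _ (stInv_mem _)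
    rw [e2] at e1
    exact e1.unique (hasDerivAt_const r (0 : ℂ))
  have derF : ∀ {f : ℝ → V5} {f' : V5} {r : ℝ}, HasDerivAt f f' r →
      HasDerivAt (fun r => (f r).1) f'.1 r := by
    intro f f' r h
    exact (ContinuousLinearMap.fst ℝ ℝ (ℂ × ℂ)).hasFDerivAt.comp_hasDerivAt r h
  have derR : ∀ {f : ℝ → V5} {f' : V5} {r : ℝ}, HasDerivAt f f' r →
      HasDerivAt (fun r => (L (f r)).re) (L f').re r := by
    intro f f' r h
    exact (Complex.reCLM.comp L).hasFDerivAt.comp_hasDerivAt r h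
  have derI : ∀ {f : ℝ → V5} {f' : V5} {r : ℝ}, HasDerivAt f f' r →
      HasDerivAt (fun r => (L (f r)).im) (L f').im r := by
    intro f f' r h
    exact (Complex.imCLM.comp L).hasFDerivAt.comp_hasDerivAt r h
  have hzero : L (ω (stInv ((0 : ℝ) : ℂ))) = 0 := by
    have := pole_val ω heq (stInv ((0 : ℝ) : ℂ)) (stInv_mem _) (by rw [stInv_0]; simp)
      (by rw [stInv_1]; simp)
    exact hL0 _ this.1 this.2
  have hAA : ∀ p, L (A1 (A1 p)) = -(((k : ℝ) ^ 2 : ℝ) : ℂ) * L p := by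
    intro p
    rw [hLA, hLA]; push_cast; linear_combination (k ^ 2 * L p) * Complex.I_sq
  have hnA : ∀ r : ℝ, nsq (A1 (ω (stInv r))) = (k : ℝ) ^ 2 * Complex.normSq (L (ω (stInv r))) := by
    intro r
    rw [hnsq, hLA, hLA', hL' _ (stInv_mem _)]
    simp [A1]
    left
    ring
  obtain ⟨ε, α, β, hε, hsol⟩ := solve_ode k hk (fun r => (ω (stInv r)).1)
    (fun r => (L (ω (stInv r))).re) (fun r => (L (ω (stInv r))).im)
    (fun r => (φ1 r).1) (fun r => (L (φ1 r)).re) (fun r => (L (φ1 r)).im)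
    (fun r => (φ2 r).1) (fun r => (L (φ2 r)).re) (fun r => (L (φ2 r)).im)
    (fun r => derF (d0 r)) (fun r => derR (d0 r)) (fun r => derI (d0 r))
    (fun r => derF (d1 r)) (fun r => derR (d1 r)) (fun r => derI (d1 r))
    (fun r => by
      have := hS _ (stInv_mem r)
      rw [hnsq, hL' _ (stInv_mem _), Complex.normSq_apply] at this
      simp at this
      linear_combination this)
    (by beta_reduce; rw [hzero]; rfl) (by beta_reduce; rw [hzero]; rfl)
    (fun r => r ^ 2 * nsq (φ1 r) + nsq (A1 (ω (stInv r))))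
    (fun r => by
      rw [hnA, hnsq, hL'1]
      simp only [Complex.normSq_apply, Complex.zero_re, Complex.zero_im]
      ring)
    (fun r => by
      have := congrArg (fun p : V5 => p.1) (ode r)
      simpa [A1] using this)
    (fun r => by
      have := congrArg (fun p : V5 => (L p).re) (ode r)
      simp only [map_add, map_smul, hAA, map_zero, Complex.add_re, Complex.smul_re,
        Complex.zero_re, smul_eq_mul, ← Complex.ofReal_neg, Complex.re_ofReal_mul] at this
      linear_combination this)
    (fun r => by
      have := congrArg (fun p : V5 => (L p).im) (ode r)
      simp only [map_add, map_smul, hAA, map_zero, Complex.add_im, Complex.smul_im,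
        Complex.zero_im, smul_eq_mul, ← Complex.ofReal_neg, Complex.im_ofReal_mul] at this
      linear_combination this)
  set m := α ^ 2 + β ^ 2 with hm
  have hm0 : 0 ≤ m := by positivity
  have hsolF : ∀ r : ℝ, 0 ≤ r → (ω (stInv r)).1 = ε * ((1 - m * r ^ (2 * k)) / (1 + m * r ^ (2 * k))) := by
    intro r hr
    rcases hr.eq_or_lt with rfl | hr
    · refine eq_at_zero (f := fun r : ℝ => (ω (stInv r)).1)
        (g := fun r : ℝ => ε * ((1 - m * r ^ (2 * k)) / (1 + m * r ^ (2 * k))))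
        (derF (d0 0)).continuousAt ?_ (fun r hr => (hsol r hr).1)
      have : (1 + m * (0 : ℝ) ^ (2 * k)) ≠ 0 := by positivity
      fun_prop (disch := assumption)
    · exact (hsol r hr).1
  -- value at the south pole
  have hsouth : ∀ F : ℝ → ℝ, ContinuousAt F 0 →
      (∀ ρ : ℝ, 0 < ρ → (ω (stInv (ρ⁻¹ : ℝ))).1 = F ρ) → (ω southPole).1 = F 0 := by
    intro F hF hρ
    let ψ : ℝ → E3 := fun ρ => (2 * ρ) • eb 0 + (ρ ^ 2 - 1) • eb 2
    have hψ0 : ψ 0 = southPole := by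
      apply e3_ext <;> simp [ψ, eb, southPole]
    have hsne : southPole ≠ 0 := by
      intro h
      have := congrArg (fun v : E3 => v 2) h
      simp [southPole] at this
    have hψc : ContinuousAt ψ 0 := by fun_prop
    have hQ : ContinuousAt (homExt ω) (ψ 0) := by
      rw [hψ0]
      exact (hs.contDiffAt (isOpen_compl_singleton.mem_nhds hsne)).continuousAt
    have hcont : ContinuousAt (fun ρ => (homExt ω (ψ ρ)).1) 0 :=
      continuous_fst.continuousAt.comp (hQ.comp hψc)
    have := eq_at_zero hcont hF (fun ρ hρ0 => by
      have e : ψ ρ = (ρ ^ 2) • cu ρ⁻¹ := by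
        apply e3_ext
        · simp [ψ, eb, cu]; field_simp
        · simp [ψ, eb, cu]
        · simp [ψ, eb, cu]; field_simp
      rw [e, hom _ (by positivity), homExt_cu]
      exact hρ ρ hρ0)
    rw [← this, hψ0]
    unfold homExt
    have hn : ‖southPole‖ = 1 := by
      have := south_mem
      unfold sphere2 at this
      rwa [mem_sphere_zero_iff_norm] at this
    rw [hn]; simp
  have hall : ∀ z : ℂ, (ω (stInv z)).1 = ε * ((1 - Complex.normSq ((⟨α, β⟩ : ℂ) * z ^ k)) /
          (1 + Complex.normSq ((⟨α, β⟩ : ℂ) * z ^ k))) ∧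
        L (ω (stInv z)) = ε * (2 * ((⟨α, β⟩ : ℂ) * z ^ k) /
          (1 + Complex.normSq ((⟨α, β⟩ : ℂ) * z ^ k) : ℝ)) := by
    intro z
    have hz : z = (‖z‖ : ℝ) * Complex.exp (Complex.I * (z.arg : ℝ)) := by
      rw [mul_comm Complex.I, Complex.norm_mul_exp_arg_mul_I]
    have hw : ω (stInv z) = circAct z.arg (ω (stInv (‖z‖ : ℝ))) := by
      rw [← heq _ _ (stInv_mem _), rot_stInv, ← hz]
    have hN : Complex.normSq ((⟨α, β⟩ : ℂ) * z ^ k) = m * ‖z‖ ^ (2 * k) := by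
      rw [Complex.normSq_mul, Complex.normSq_mk, map_pow, Complex.normSq_eq_norm_sq, hm]
      ring
    rw [hN, hw]
    refine ⟨hsolF _ (norm_nonneg z), ?_⟩
    rw [hLc]
    rcases (norm_nonneg z).eq_or_lt with h0 | hpos
    · rw [← h0, hzero]
      have : z = 0 := by rw [eq_comm, norm_eq_zero] at h0; exact h0
      simp [this, hk.ne']
    · obtain ⟨-, q2, q3⟩ := hsol _ hpos
      have hLr : L (ω (stInv (‖z‖ : ℝ))) = ε * (2 * ((⟨α, β⟩ : ℂ) * ((‖z‖ : ℝ) : ℂ) ^ k) /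
          (1 + m * ‖z‖ ^ (2 * k) : ℝ)) := by
        have e : (ε : ℂ) * (2 * ((⟨α, β⟩ : ℂ) * ((‖z‖ : ℝ) : ℂ) ^ k) /
          (1 + m * ‖z‖ ^ (2 * k) : ℝ)) =
          ((ε * (2 * ‖z‖ ^ k / (1 + m * ‖z‖ ^ (2 * k))) : ℝ) : ℂ) * (⟨α, β⟩ : ℂ) := by
          push_cast; ring
        rw [e]
        apply Complex.ext
        · rw [Complex.re_ofReal_mul, q2]; ring
        · rw [Complex.im_ofReal_mul, q3]; ring
      rw [hLr]
      have hzk : z ^ k = ((‖z‖ : ℝ) : ℂ) ^ k * Complex.exp (Complex.I * (z.arg : ℝ)) ^ k := by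
        rw [← mul_pow, ← hz]
      rw [hzk]; ring
  have hμ : m ≠ 0 := by
    intro hm'
    have hst : ∀ x ∈ sphere2, ω x = (ε, 0, 0) := by
      intro x hx
      apply pole_first (hS x hx) hε
      by_cases hxs : x = southPole
      · rw [hxs]
        exact hsouth (fun _ => ε) continuousAt_const (fun ρ hρ => by
          rw [hsolF _ (by positivity), hm']; simp)
      · obtain ⟨z, rfl⟩ := exists_stInv x hx hxs
        have : (⟨α, β⟩ : ℂ) = 0 := by
          rw [← Complex.normSq_eq_zero, Complex.normSq_mk, ← hm', hm]; ring
        rw [(hall z).1, this]; simp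
    obtain ⟨x, hx, y, hy, hxy⟩ := hnc
    exact hxy (by rw [hst x hx, hst y hy])
  refine ⟨ε, ⟨α, β⟩, hε, ?_, ?_, hall⟩
  · intro h
    rw [← Complex.normSq_eq_zero, Complex.normSq_mk] at h
    apply hμ; rw [hm]; linear_combination h
  · apply pole_first (hS _ south_mem) (by rcases hε with rfl | rfl <;> simp)
    have hd : (0 : ℝ) ^ (2 * k) + m ≠ 0 := by
      rw [zero_pow (by omega), zero_add]; exact hμ
    rw [hsouth (fun ρ => ε * ((ρ ^ (2 * k) - m) / (ρ ^ (2 * k) + m)))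
      (by fun_prop (disch := assumption)) (fun ρ hρ => by
        rw [hsolF _ (by positivity)]
        congr 1
        rw [inv_pow]
        have : 0 < ρ ^ (2 * k) := by positivity
        field_simp)]
    rw [zero_pow (by omega)]
    field_simp
    ring

def P1 : V5 →L[ℝ] ℂ := (ContinuousLinearMap.fst ℝ ℂ ℂ).comp (ContinuousLinearMap.snd ℝ ℝ (ℂ × ℂ))

def P2 : V5 →L[ℝ] ℂ := (ContinuousLinearMap.snd ℝ ℂ ℂ).comp (ContinuousLinearMap.snd ℝ ℝ (ℂ × ℂ))

lemma P1_apply (p : V5) : P1 p = p.2.1 := rfl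

lemma P2_apply (p : V5) : P2 p = p.2.2 := rfl

lemma st_complex (w : ℂ) : ((stInv w 0 : ℝ) : ℂ) + ((stInv w 1 : ℝ) : ℂ) * Complex.I
    = 2 * w / (1 + Complex.normSq w : ℝ) := by
  rw [stInv_0, stInv_1]
  have h : (((1 + Complex.normSq w : ℝ)) : ℂ) ≠ 0 := by
    exact_mod_cast (den_pos w).ne'
  rw [Complex.ofReal_div, Complex.ofReal_div]
  field_simp
  apply Complex.ext <;> simp

lemma degenerate (ω : E3 → V5) (hS : ∀ x ∈ sphere2, nsq (ω x) = 1) (heq : EquivariantS ω)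
    (hnf : Submodule.span ℝ (ω '' sphere2) ≠ ⊤) :
    (∀ x ∈ sphere2, (ω x).2.2 = 0) ∨ (∀ x ∈ sphere2, (ω x).2.1 = 0) := by
  obtain ⟨f, hf0, hf⟩ := Submodule.exists_le_ker_of_lt_top _ (lt_top_iff_ne_top.2 hnf)
  have hv : ∀ x ∈ sphere2, f (ω x) = 0 := fun x hx =>
    hf (Submodule.subset_span ⟨x, hx, rfl⟩)
  have hrm : ∀ α, ∀ x ∈ sphere2, rot3 α x ∈ sphere2 := by
    intro α x hx
    rw [mem_sphere2] at hx ⊢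
    rw [rot3_0, rot3_1, rot3_2]
    linear_combination hx + (x 0 ^ 2 + x 1 ^ 2) * Real.sin_sq_add_cos_sq α
  have hvr : ∀ α, ∀ x ∈ sphere2, f (circAct α (ω x)) = 0 := by
    intro α x hx
    rw [← heq α x hx]
    exact hv _ (hrm α x hx)
  have hdec : ∀ p : V5, f p = p.1 * f (1, 0, 0) + f (0, p.2.1, 0) + f (0, 0, p.2.2) := by
    intro p
    have : p = p.1 • ((1, 0, 0) : V5) + (0, p.2.1, 0) + (0, 0, p.2.2) := by
      ext <;> simp
    conv_lhs => rw [this]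
    simp only [map_add, map_smul, smul_eq_mul]
  have hneg1 : ∀ z : ℂ, f (0, -z, 0) = - f (0, z, 0) := by
    intro z; rw [← map_neg]; simp
  have hneg2 : ∀ z : ℂ, f (0, 0, -z) = - f (0, 0, z) := by
    intro z; rw [← map_neg]; simp
  -- separate weights
  have hsep : ∀ x ∈ sphere2, (ω x).1 * f (1, 0, 0) = 0 ∧ f (0, (ω x).2.1, 0) = 0 ∧
      f (0, 0, (ω x).2.2) = 0 ∧ f (0, Complex.I * (ω x).2.1, 0) = 0 := by
    intro x hx
    have e0 := hv x hx
    have e1 := hvr Real.pi x hx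
    have e2 := hvr (Real.pi / 2) x hx
    have e3 := hvr (-(Real.pi / 2)) x hx
    have x1 : Complex.exp (Complex.I * (Real.pi : ℝ)) = -1 := by
      rw [mul_comm, Complex.exp_pi_mul_I]
    have x1' : Complex.exp (2 * Complex.I * (Real.pi : ℝ)) = 1 := by
      rw [← Complex.exp_two_pi_mul_I]; congr 1; ring
    have x2 : Complex.exp (Complex.I * ((Real.pi / 2 : ℝ) : ℂ)) = Complex.I := by
      have h : Complex.I * ((Real.pi / 2 : ℝ) : ℂ) = (Real.pi : ℂ) / 2 * Complex.I := by
        push_cast; ring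
      rw [h, Complex.exp_pi_div_two_mul_I]
    have x2' : Complex.exp (2 * Complex.I * ((Real.pi / 2 : ℝ) : ℂ)) = -1 := by
      rw [← Complex.exp_pi_mul_I]; congr 1; push_cast; ring
    have x3 : Complex.exp (Complex.I * ((-(Real.pi / 2) : ℝ) : ℂ)) = -Complex.I := by
      rw [Complex.ofReal_neg, mul_neg, Complex.exp_neg, x2, Complex.inv_I]
    have x3' : Complex.exp (2 * Complex.I * ((-(Real.pi / 2) : ℝ) : ℂ)) = -1 := by
      rw [Complex.ofReal_neg, mul_neg, Complex.exp_neg, x2']; norm_num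
    rw [hdec] at e0 e1 e2 e3
    simp only [circAct, x1, x1', x2, x2', x3, x3', one_mul, neg_mul, hneg1, hneg2] at e0 e1 e2 e3
    refine ⟨?_, ?_, ?_, ?_⟩ <;> linarith
  have hI : ∀ (z w : ℂ) , w ≠ 0 → f (0, w, 0) = 0 → f (0, Complex.I * w, 0) = 0 →
      f (0, z, 0) = 0 := by
    intro z w hw h1 h2
    have : ((0, z, 0) : V5) = (z / w).re • ((0, w, 0) : V5) + (z / w).im •
        ((0, Complex.I * w, 0) : V5) := by
      have hz : z = ((z / w).re : ℂ) * w + ((z / w).im : ℂ) * (Complex.I * w) := by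
        have : z = (z / w) * w := by field_simp
        conv_lhs => rw [this, ← Complex.re_add_im (z / w)]
        ring
      ext1
      · simp
      · ext1
        · simp only [Prod.smul_mk, Prod.mk_add_mk, Complex.real_smul]; exact hz
        · simp
    rw [this, map_add, map_smul, map_smul, h1, h2]; simp
  by_cases ha : f (1, 0, 0) = 0
  · by_cases hb : ∀ x ∈ sphere2, (ω x).2.1 = 0
    · exact Or.inr hb
    · left
      push Not at hb
      obtain ⟨x0, hx0, hne⟩ := hb
      have hf1 : ∀ z : ℂ, f (0, z, 0) = 0 := fun z =>
        hI z _ hne (hsep x0 hx0).2.1 (hsep x0 hx0).2.2.2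
      intro x hx
      by_contra hw
      apply hf0
      have hk2 := (hsep x hx).2.2.1
      have hk3 : f (0, 0, Complex.I * (ω x).2.2) = 0 := by
        have := hvr (Real.pi / 4) x hx
        have x4 : Complex.exp (2 * Complex.I * ((Real.pi / 4 : ℝ) : ℂ)) = Complex.I := by
          have h : 2 * Complex.I * ((Real.pi / 4 : ℝ) : ℂ) = (Real.pi : ℂ) / 2 * Complex.I := by
            push_cast; ring
          rw [h, Complex.exp_pi_div_two_mul_I]
        rw [hdec, hf1, ha] at this
        simp only [circAct, x4, mul_zero, zero_mul, zero_add, add_zero] at this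
        exact this
      apply LinearMap.ext
      intro p
      rw [hdec, ha, hf1]
      generalize (ω x).2.2 = w at *
      generalize p.2.2 = z
      have : ((0, 0, z) : V5) = (z / w).re • ((0, 0, w) : V5) + (z / w).im •
          ((0, 0, Complex.I * w) : V5) := by
        have hz : z = ((z / w).re : ℂ) * w + ((z / w).im : ℂ) * (Complex.I * w) := by
          have : z = (z / w) * w := by field_simp
          conv_lhs => rw [this, ← Complex.re_add_im (z / w)]
          ring
        ext1
        · simp
        · ext1
          · simp
          · simp only [Prod.smul_mk, Prod.mk_add_mk, Complex.real_smul]; exact hz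
      rw [this, map_add, map_smul, map_smul, hk2, hk3]; simp
  · exfalso
    have h1 := (mul_eq_zero.1 (hsep _ south_mem).1).resolve_right ha
    have h2 := pole_val ω heq southPole south_mem (by simp [southPole]) (by simp [southPole])
    have h3 := hS _ south_mem
    simp [nsq, h1, h2.1, h2.2] at h3

/-- Classification of linearly degenerate equivariant harmonic spheres: a nonconstant,
smooth, S¹-equivariant, non linearly full harmonic sphere ω is, up to sign determined
by ω(S⁽²⁾), either ω_eq^{(1)} ∘ σ₂⁻¹(μ₁ z) (with ω₂ ≡ 0) or ω_eq^{(2)} ∘ σ₂⁻¹(μ₂ z²)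
(with ω₁ ≡ 0), and exactly one of the two alternatives holds. -/
theorem statement5 (ω : E3 → V5)
    (hH : IsHarmonicSphere ω) (heq : EquivariantS ω)
    (hnc : ∃ x ∈ sphere2, ∃ y ∈ sphere2, ω x ≠ ω y)
    (hnf : Submodule.span ℝ (ω '' sphere2) ≠ ⊤) :
    Xor'
      ((∀ x ∈ sphere2, (ω x).2.2 = 0) ∧
        ∃ μ1 : ℂ, μ1 ≠ 0 ∧
          ((ω southPole = ((-1 : ℝ), 0, 0) ∧
              ∀ z : ℂ, ω (stInv z) = omegaEq1 (stInv (μ1 * z))) ∨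
            (ω southPole = ((1 : ℝ), 0, 0) ∧
              ∀ z : ℂ, ω (stInv z) = -omegaEq1 (stInv (μ1 * z)))))
      ((∀ x ∈ sphere2, (ω x).2.1 = 0) ∧
        ∃ μ2 : ℂ, μ2 ≠ 0 ∧
          ((ω southPole = ((-1 : ℝ), 0, 0) ∧
              ∀ z : ℂ, ω (stInv z) = omegaEq2 (stInv (μ2 * z ^ 2))) ∨
            (ω southPole = ((1 : ℝ), 0, 0) ∧
              ∀ z : ℂ, ω (stInv z) = -omegaEq2 (stInv (μ2 * z ^ 2))))) := by
  have hS := hH.1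
  have hsouth0 := pole_val ω heq southPole south_mem (by simp [southPole]) (by simp [southPole])
  have hexcl : ∀ μ : ℂ, μ ≠ 0 → omegaEq1 (stInv (μ * 1)) ≠ 0 ∧
      (omegaEq1 (stInv (μ * 1))).2.1 ≠ 0 := by
    intro μ hμ
    have h : (omegaEq1 (stInv (μ * 1))).2.1 ≠ 0 := by
      simp only [omegaEq1]
      rw [st_complex]
      have := (den_pos (μ * 1)).ne'
      have h' : (((1 + Complex.normSq (μ * 1) : ℝ)) : ℂ) ≠ 0 := by exact_mod_cast this
      simp only [mul_one] at h' ⊢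
      exact div_ne_zero (mul_ne_zero two_ne_zero hμ) h'
    exact ⟨fun h0 => h (by rw [h0]; rfl), h⟩
  have hnot : ∀ μ1 : ℂ, μ1 ≠ 0 → (∀ x ∈ sphere2, (ω x).2.1 = 0) →
      ¬ ((ω southPole = ((-1 : ℝ), 0, 0) ∧
              ∀ z : ℂ, ω (stInv z) = omegaEq1 (stInv (μ1 * z))) ∨
            (ω southPole = ((1 : ℝ), 0, 0) ∧
              ∀ z : ℂ, ω (stInv z) = -omegaEq1 (stInv (μ1 * z)))) := by
    intro μ1 hμ h0 h
    have h1 := h0 _ (stInv_mem 1)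
    rcases h with ⟨-, h⟩ | ⟨-, h⟩
    · rw [h 1] at h1
      exact (hexcl μ1 hμ).2 h1
    · rw [h 1] at h1
      apply (hexcl μ1 hμ).2
      simpa using h1
  rcases degenerate ω hS heq hnf with h2 | h1
  · have hA : ∃ μ1 : ℂ, μ1 ≠ 0 ∧
          ((ω southPole = ((-1 : ℝ), 0, 0) ∧
              ∀ z : ℂ, ω (stInv z) = omegaEq1 (stInv (μ1 * z))) ∨
            (ω southPole = ((1 : ℝ), 0, 0) ∧
              ∀ z : ℂ, ω (stInv z) = -omegaEq1 (stInv (μ1 * z)))) := by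
      obtain ⟨ε, μ, hε, hμ, hsp, hz⟩ := fin_lemma ω hH heq hnc 1 one_pos P1 P2 (2 * Complex.I)
        (fun p => rfl) (fun p => by simp [P1_apply, A1]) (fun p => by simp [P2_apply, A1])
        (fun α p => by simp [P1_apply, circAct]) h2 (fun p h _ => h)
      refine ⟨μ, hμ, ?_⟩
      have key2 : ∀ z, ω (stInv z) = ε • omegaEq1 (stInv (μ * z)) := by
        intro z
        obtain ⟨q1, q2⟩ := hz z
        rw [pow_one] at q1 q2
        have q3 := h2 _ (stInv_mem z)
        rw [P1_apply, ← st_complex] at q2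
        rw [← stInv_2] at q1
        ext1
        · exact q1
        · ext1
          · rw [q2]; simp only [omegaEq1, Prod.smul_snd, Prod.smul_fst, Complex.real_smul]
          · rw [q3]; simp [omegaEq1]
      rcases hε with rfl | rfl
      · left
        exact ⟨hsp, fun z => by rw [key2, one_smul]⟩
      · right
        refine ⟨by rw [hsp]; simp, fun z => by rw [key2, neg_smul, one_smul]⟩
    refine Or.inl ⟨⟨h2, hA⟩, ?_⟩
    rintro ⟨h1, -⟩
    obtain ⟨μ, hμ, h⟩ := hA
    exact hnot μ hμ h1 h
  · refine Or.inr ⟨⟨h1, ?_⟩, ?_⟩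
    · obtain ⟨ε, μ, hε, hμ, hsp, hz⟩ := fin_lemma ω hH heq hnc 2 two_pos P2 P1 Complex.I
        (fun p => by simp only [nsq, P1_apply, P2_apply]; ring)
        (fun p => by simp [P2_apply, A1]) (fun p => by simp [P1_apply, A1])
        (fun α p => by
          simp only [P2_apply, circAct]
          rw [← Complex.exp_nat_mul]
          congr 2
          push_cast; ring) h1 (fun p _ h => h)
      refine ⟨μ, hμ, ?_⟩
      have key2 : ∀ z, ω (stInv z) = ε • omegaEq2 (stInv (μ * z ^ 2)) := by
        intro z
        obtain ⟨q1, q2⟩ := hz z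
        have q3 := h1 _ (stInv_mem z)
        rw [P2_apply, ← st_complex] at q2
        rw [← stInv_2] at q1
        ext1
        · exact q1
        · ext1
          · rw [q3]; simp [omegaEq2]
          · rw [q2]; simp only [omegaEq2, Prod.smul_snd, Complex.real_smul]
      rcases hε with rfl | rfl
      · left
        exact ⟨hsp, fun z => by rw [key2, one_smul]⟩
      · right
        refine ⟨by rw [hsp]; simp, fun z => by rw [key2, neg_smul, one_smul]⟩
    · rintro ⟨-, μ, hμ, h⟩
      exact hnot μ hμ h1 h
end
end

section
/- Fix μ₁, μ₂ ∈ ℂ and let Ψ(z₀,z₁) = (z₀³, μ₁z₀²z₁, μ₂z₀z₁², −(μ₁μ₂/3)z₁³). Then: (a) for every (z₀,z₁) ∈ ℂ²∖{0}, τ(Ψ(z₀,z₁)) equals D(z₀,z₁)⁻¹·( |z₀|⁶ − |μ₁|²|z₀|⁴|z₁|² − |μ₂|²|z₀|²|z₁|⁴ + (|μ₁|²|μ₂|²/9)|z₁|⁶ , 2μ₁ z̄₀z₁(|z₀|⁴ − (|μ₂|²/3)|z₁|⁴) , 2μ₂ z̄₀²z₁²(|z₀|² + (|μ₁|²/3)|z₁|²)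 ), where D(z₀,z₁) = |z₀|⁶ + |μ₁|²|z₀|⁴|z₁|² + |μ₂|²|z₀|²|z₁|⁴ + (|μ₁|²|μ₂|²/9)|z₁|⁶; (b) the resulting map ω_{μ₁,μ₂}: S² → S⁴ (obtained via the identification [z₀,z₁] ↦ σ₂⁻¹(z₁/z₀)) is smooth, S¹-equivariant, is a harmonic sphere, and satisfies ω_{μ₁,μ₂}(0,0,1) = (1,0,0); (c) ω_{μ₁,μ₂} is linearly full if and only if μ₁ ≠ 0 and μ₂ ≠ 0; and (d) if μ₁μ₂ ≠ 0 then ∫_{B₁} |∇ŵ|² dx = 24π, where ŵ(x) = ω_{μ₁,μ₂}(x/|x|) and B₁ ⊂ ℝ³ is the unit ball. -/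
noncomputable section

open MeasureTheory
open scoped Classical

/-- The denominator D(z₀,z₁) in the explicit formula for ω_{μ₁,μ₂}. -/
def Dfun (μ1 μ2 z0 z1 : ℂ) : ℝ :=
  Complex.normSq z0 ^ 3 + Complex.normSq μ1 * Complex.normSq z0 ^ 2 * Complex.normSq z1 +
    Complex.normSq μ2 * Complex.normSq z0 * Complex.normSq z1 ^ 2 +
    Complex.normSq μ1 * Complex.normSq μ2 / 9 * Complex.normSq z1 ^ 3

/-- The explicit formula for ω_{μ₁,μ₂}([z₀,z₁]). -/
def explicitFam (μ1 μ2 z0 z1 : ℂ) : V5 :=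
  ((Complex.normSq z0 ^ 3 - Complex.normSq μ1 * Complex.normSq z0 ^ 2 * Complex.normSq z1 -
        Complex.normSq μ2 * Complex.normSq z0 * Complex.normSq z1 ^ 2 +
        Complex.normSq μ1 * Complex.normSq μ2 / 9 * Complex.normSq z1 ^ 3) /
      Dfun μ1 μ2 z0 z1,
    2 * μ1 * conj' z0 * z1 *
        ((Complex.normSq z0 ^ 2 - Complex.normSq μ2 / 3 * Complex.normSq z1 ^ 2 : ℝ) : ℂ) /
      ((Dfun μ1 μ2 z0 z1 : ℝ) : ℂ),
    2 * μ2 * conj' z0 ^ 2 * z1 ^ 2 *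
        ((Complex.normSq z0 + Complex.normSq μ1 / 3 * Complex.normSq z1 : ℝ) : ℂ) /
      ((Dfun μ1 μ2 z0 z1 : ℝ) : ℂ))

def ee (i : Fin 3) : E3 := EuclideanSpace.single i (1 : ℝ)

structure Jet {F : Type} [NormedAddCommGroup F] [NormedSpace ℝ F]
    (u : E3 → F) (g : Fin 3 → E3 → F) (l : E3 → F) : Prop where
  d0 : ∀ x, x ≠ 0 → DifferentiableAt ℝ u x
  d1 : ∀ x, x ≠ 0 → ∀ i, fderiv ℝ u x (EuclideanSpace.single i (1 : ℝ)) = g i x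
  e0 : ∀ x, x ≠ 0 → ∀ i, DifferentiableAt ℝ (g i) x
  e1 : ∀ x, x ≠ 0 → ∑ i, fderiv ℝ (g i) x (EuclideanSpace.single i (1 : ℝ)) = l x

lemma Jet.smul {F : Type} [NormedAddCommGroup F] [NormedSpace ℝ F]
    {u : E3 → ℝ} {g : Fin 3 → E3 → ℝ} {l : E3 → ℝ}
    {v : E3 → F} {h : Fin 3 → E3 → F} {m : E3 → F}
    (hu : Jet u g l) (hv : Jet v h m) :
    Jet (fun x => u x • v x) (fun i x => u x • h i x + g i x • v x)
      (fun x => u x • m x + (2 : ℝ) • (∑ i, g i x • h i x) + l x • v x) where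
  d0 x hx := (hu.d0 x hx).smul (hv.d0 x hx)
  d1 x hx i := by
    rw [fderiv_fun_smul (hu.d0 x hx) (hv.d0 x hx)]
    simp [hu.d1 x hx i, hv.d1 x hx i]
  e0 x hx i := ((hu.d0 x hx).smul (hv.e0 x hx i)).add ((hu.e0 x hx i).smul (hv.d0 x hx))
  e1 x hx := by
    rw [← hu.e1 x hx, ← hv.e1 x hx, Finset.smul_sum, Finset.smul_sum, Finset.sum_smul,
      ← Finset.sum_add_distrib, ← Finset.sum_add_distrib]
    refine Finset.sum_congr rfl fun i _ => ?_
    have h1 : DifferentiableAt ℝ (fun x => u x • h i x) x := (hu.d0 x hx).smul (hv.e0 x hx i)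
    have h2 : DifferentiableAt ℝ (fun x => g i x • v x) x := (hu.e0 x hx i).smul (hv.d0 x hx)
    rw [fderiv_fun_add h1 h2, fderiv_fun_smul (hu.d0 x hx) (hv.e0 x hx i),
      fderiv_fun_smul (hu.e0 x hx i) (hv.d0 x hx)]
    simp [hu.d1 x hx i, hv.d1 x hx i]
    module

lemma Jet.cmul {u : E3 → ℂ} {g : Fin 3 → E3 → ℂ} {l : E3 → ℂ} (hu : Jet u g l) (c : ℂ) :
    Jet (fun x => c * u x) (fun i x => c * g i x) (fun x => c * l x) where
  d0 x hx := (hu.d0 x hx).const_mul c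
  d1 x hx i := by
    rw [fderiv_const_mul (hu.d0 x hx)]
    simp [hu.d1 x hx i]
  e0 x hx i := (hu.e0 x hx i).const_mul c
  e1 x hx := by
    rw [← hu.e1 x hx, Finset.mul_sum]
    refine Finset.sum_congr rfl fun i _ => ?_
    rw [fderiv_const_mul (hu.e0 x hx i)]
    simp

lemma Jet.pair {F G : Type} [NormedAddCommGroup F] [NormedSpace ℝ F]
    [NormedAddCommGroup G] [NormedSpace ℝ G]
    {u : E3 → F} {g : Fin 3 → E3 → F} {l : E3 → F}
    {v : E3 → G} {h : Fin 3 → E3 → G} {m : E3 → G}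
    (hu : Jet u g l) (hv : Jet v h m) :
    Jet (fun x => (u x, v x)) (fun i x => (g i x, h i x)) (fun x => (l x, m x)) where
  d0 x hx := (hu.d0 x hx).prodMk (hv.d0 x hx)
  d1 x hx i := by
    rw [DifferentiableAt.fderiv_prodMk (hu.d0 x hx) (hv.d0 x hx)]
    simp [hu.d1 x hx i, hv.d1 x hx i]
  e0 x hx i := (hu.e0 x hx i).prodMk (hv.e0 x hx i)
  e1 x hx := by
    rw [← hu.e1 x hx, ← hv.e1 x hx]
    rw [Finset.sum_congr rfl fun i _ => by
      rw [DifferentiableAt.fderiv_prodMk (hu.e0 x hx i) (hv.e0 x hx i)]]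
    simp [Prod.ext_iff, Prod.fst_sum, Prod.snd_sum]

lemma Jet.lap_eq {u : E3 → V5} {g : Fin 3 → E3 → V5} {l : E3 → V5} (hu : Jet u g l)
    {w : E3 → V5} (hw : ∀ x, x ≠ 0 → w x = u x) (x : E3) (hx : x ≠ 0) :
    lap w x = l x ∧ gradSq w x = ∑ i, nsq (g i x) := by
  have hn : ∀ y, y ≠ 0 → w =ᶠ[nhds y] u := fun y hy => by
    filter_upwards [isOpen_compl_singleton.mem_nhds (show y ∈ ({0} : Set E3)ᶜ from hy)] with z hz
    exact hw z hz
  have hd : ∀ y, y ≠ 0 → ∀ i, fderiv ℝ w y (EuclideanSpace.single i (1 : ℝ)) = g i y := by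
    intro y hy i
    rw [(hn y hy).fderiv_eq, hu.d1 y hy i]
  constructor
  · rw [← hu.e1 x hx, lap]
    refine Finset.sum_congr rfl fun i _ => ?_
    have : (fun y => fderiv ℝ w y (EuclideanSpace.single i (1 : ℝ))) =ᶠ[nhds x] g i := by
      filter_upwards [isOpen_compl_singleton.mem_nhds (show x ∈ ({0} : Set E3)ᶜ from hx)] with z hz
      exact hd z hz i
    rw [this.fderiv_eq]
  · rw [gradSq]
    exact Finset.sum_congr rfl fun i _ => by rw [hd x hx i]

def pP (x : E3) : ℝ := ‖x‖ + x 2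
def qQ (x : E3) : ℝ := ‖x‖ - x 2
def zZ (x : E3) : ℂ := (x 0 : ℂ) + (x 1 : ℂ) * Complex.I

def del (i : Fin 3) : ℝ := if i = 2 then 1 else 0
def eps (i : Fin 3) : ℂ := ![1, Complex.I, 0] i

lemma normsq3 (x : E3) : x 0 ^ 2 + x 1 ^ 2 + x 2 ^ 2 = ‖x‖ ^ 2 := by
  rw [EuclideanSpace.norm_sq_eq]; simp [Fin.sum_univ_three]

lemma hasF_norm (x : E3) (hx : x ≠ 0) :
    HasFDerivAt (fun y : E3 => ‖y‖) (‖x‖⁻¹ • innerSL ℝ x) x := by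
  have h := (hasStrictFDerivAt_norm_sq x).hasFDerivAt.sqrt (by simpa using hx)
  have h2 : (fun y : E3 => √(‖y‖ ^ 2)) = fun y => ‖y‖ := by
    ext y; exact Real.sqrt_sq (norm_nonneg y)
  rw [h2] at h
  have h3 : ((1 / (2 * √(‖x‖ ^ 2))) • 2 • (innerSL ℝ) x) = ‖x‖⁻¹ • innerSL ℝ x := by
    rw [Real.sqrt_sq (norm_nonneg x)]
    have : ‖x‖ ≠ 0 := by simpa using hx
    ext y
    simp
    field_simp
  rw [← h3]
  exact h

lemma hasF_coord (x : E3) (i : Fin 3) :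
    HasFDerivAt (fun y : E3 => y i) (EuclideanSpace.proj i : E3 →L[ℝ] ℝ) x :=
  (EuclideanSpace.proj i : E3 →L[ℝ] ℝ).hasFDerivAt

/-- derivative of p,q: s = ±1 -/
lemma jet_norm : Jet (fun x : E3 => ‖x‖) (fun i x => x i / ‖x‖) (fun x => 2 / ‖x‖) where
  d0 x hx := (hasF_norm x hx).differentiableAt
  d1 x hx i := by
    rw [(hasF_norm x hx).fderiv]
    simp [EuclideanSpace.inner_single_right]
    ring
  e0 x hx i := by
    have := (hasF_norm x hx).differentiableAt
    have h2 := (hasF_coord x i).differentiableAt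
    have hr : ‖x‖ ≠ 0 := by simpa using hx
    simp only [div_eq_mul_inv]
    exact h2.mul (this.inv hr)
  e1 x hx := by
    have hr : ‖x‖ ≠ 0 := by simpa using hx
    have : ∀ i : Fin 3, fderiv ℝ (fun y : E3 => y i / ‖y‖) x (EuclideanSpace.single i (1:ℝ))
        = 1 / ‖x‖ - x i ^ 2 / ‖x‖ ^ 3 := by
      intro i
      have h1 := (hasF_norm x hx)
      have h2 := (hasF_coord x i)
      simp only [div_eq_mul_inv]
      rw [fderiv_fun_mul h2.differentiableAt (h1.differentiableAt.fun_inv hr),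
        HasFDerivAt.fderiv (f := fun y : E3 => ‖y‖⁻¹)
          ((hasDerivAt_inv hr).comp_hasFDerivAt x h1), h2.fderiv]
      simp [EuclideanSpace.inner_single_right]
      field_simp
      ring
    rw [Finset.sum_congr rfl fun i _ => this i]
    simp only [Fin.sum_univ_three]
    have := normsq3 x
    field_simp
    linear_combination -this

lemma jet_coord (j : Fin 3) : Jet (fun x : E3 => x j) (fun i _ => if i = j then 1 else 0)
    (fun _ => 0) where
  d0 x _ := (hasF_coord x j).differentiableAt
  d1 x _ i := by
    rw [(hasF_coord x j).fderiv]
    simp [eq_comm]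
  e0 x _ i := differentiableAt_const _
  e1 x _ := by simp

lemma Jet.add {F : Type} [NormedAddCommGroup F] [NormedSpace ℝ F]
    {u : E3 → F} {g : Fin 3 → E3 → F} {l : E3 → F}
    {v : E3 → F} {h : Fin 3 → E3 → F} {m : E3 → F}
    (hu : Jet u g l) (hv : Jet v h m) :
    Jet (fun x => u x + v x) (fun i x => g i x + h i x) (fun x => l x + m x) where
  d0 x hx := (hu.d0 x hx).add (hv.d0 x hx)
  d1 x hx i := by
    rw [fderiv_fun_add (hu.d0 x hx) (hv.d0 x hx)]
    simp [hu.d1 x hx i, hv.d1 x hx i]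
  e0 x hx i := (hu.e0 x hx i).add (hv.e0 x hx i)
  e1 x hx := by
    rw [← hu.e1 x hx, ← hv.e1 x hx, ← Finset.sum_add_distrib]
    refine Finset.sum_congr rfl fun i _ => ?_
    rw [fderiv_fun_add (hu.e0 x hx i) (hv.e0 x hx i)]
    simp

lemma Jet.congr {F : Type} [NormedAddCommGroup F] [NormedSpace ℝ F]
    {u : E3 → F} {g h : Fin 3 → E3 → F} {l m : E3 → F}
    (hu : Jet u g l) (hg : ∀ i x, g i x = h i x) (hl : ∀ x, x ≠ 0 → l x = m x) :
    Jet u h m := by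
  have : g = h := by ext i x; exact hg i x
  subst this
  exact ⟨hu.d0, hu.d1, hu.e0, fun x hx => by rw [hu.e1 x hx, hl x hx]⟩

lemma jet_const {F : Type} [NormedAddCommGroup F] [NormedSpace ℝ F] (c : F) :
    Jet (fun _ : E3 => c) (fun _ _ => 0) (fun _ => 0) where
  d0 x _ := differentiableAt_const _
  d1 x _ i := by simp
  e0 x _ i := differentiableAt_const _
  e1 x _ := by simp

lemma jet_p : Jet pP (fun i x => x i / ‖x‖ + del i) (fun x => 2 / ‖x‖) :=
  (jet_norm.add (jet_coord 2)).congr (fun i x => rfl) (fun x _ => by simp)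

lemma jet_q : Jet qQ (fun i x => x i / ‖x‖ - del i) (fun x => 2 / ‖x‖) := by
  have := (jet_norm.add ((jet_const (-1 : ℝ)).smul (jet_coord 2))).congr
    (h := fun i x => x i / ‖x‖ - del i) (m := fun x => 2 / ‖x‖)
    (fun i x => by simp [del]; split_ifs <;> ring) (fun x _ => by simp)
  convert this using 1
  ext x; simp [qQ]; ring

lemma jet_z : Jet zZ (fun i _ => eps i) (fun _ => 0) := by
  have h1 := ((jet_coord 0).smul (jet_const (1 : ℂ))).add
    ((jet_coord 1).smul (jet_const Complex.I))
  have := h1.congr (h := fun i _ => eps i) (m := fun _ => 0)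
    (fun i x => by fin_cases i <;> simp [eps]) (fun x _ => by simp)
  convert this using 1
  ext x; simp [zZ]

lemma zZ_sq (x : E3) : Complex.normSq (zZ x) = pP x * qQ x := by
  have := normsq3 x
  simp [zZ, pP, qQ, Complex.normSq_apply]
  linear_combination this

lemma jet_z2 : Jet (fun x => zZ x ^ 2) (fun i x => 2 * zZ x * eps i) (fun _ => 0) where
  d0 x hx := (jet_z.d0 x hx).pow 2
  d1 x hx i := by
    have : (fun x => zZ x ^ 2) = fun x => zZ x * zZ x := by ext; ring
    rw [this, fderiv_fun_mul (jet_z.d0 x hx) (jet_z.d0 x hx)]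
    simp [jet_z.d1 x hx i]; ring
  e0 x hx i := ((jet_z.d0 x hx).const_mul 2).mul_const _
  e1 x hx := by
    rw [Finset.sum_congr rfl fun i _ => by
      rw [fderiv_mul_const ((jet_z.d0 x hx).const_mul 2), fderiv_const_mul (jet_z.d0 x hx)]]
    simp [jet_z.d1 x hx, Fin.sum_univ_three, eps]
    ring_nf; simp

structure R2 (f fp fq fpp fqq : ℝ → ℝ → ℝ) (p q : ℝ) : Prop where
  D0 : DifferentiableAt ℝ (fun v : ℝ × ℝ => f v.1 v.2) (p, q)
  Dp : DifferentiableAt ℝ (fun v : ℝ × ℝ => fp v.1 v.2) (p, q)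
  Dq : DifferentiableAt ℝ (fun v : ℝ × ℝ => fq v.1 v.2) (p, q)
  hp : HasDerivAt (fun t => f t q) (fp p q) p
  hq : HasDerivAt (fun t => f p t) (fq p q) q
  hpp : HasDerivAt (fun t => fp t q) (fpp p q) p
  hqq : HasDerivAt (fun t => fq p t) (fqq p q) q

lemma hasDerivAt_cubic (a b c e t : ℝ) :
    HasDerivAt (fun t => a * t ^ 3 + b * t ^ 2 + c * t + e) (3 * a * t ^ 2 + 2 * b * t + c) t := by
  have h := ((((hasDerivAt_pow 3 t).const_mul a).add ((hasDerivAt_pow 2 t).const_mul b)).add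
    ((hasDerivAt_id t).const_mul c)).add_const e
  refine HasDerivAt.congr_deriv h ?_
  simp; ring

/-- general polynomial -/
lemma R2_poly (c0 c1 c2 c3 a0 a1 a2 b0 b1 k p q : ℝ) :
    R2 (fun p q => c0 * p ^ 3 + c1 * p ^ 2 * q + c2 * p * q ^ 2 + c3 * q ^ 3 +
        a0 * p ^ 2 + a1 * p * q + a2 * q ^ 2 + b0 * p + b1 * q + k)
      (fun p q => 3 * c0 * p ^ 2 + 2 * c1 * p * q + c2 * q ^ 2 + 2 * a0 * p + a1 * q + b0)
      (fun p q => c1 * p ^ 2 + 2 * c2 * p * q + 3 * c3 * q ^ 2 + a1 * p + 2 * a2 * q + b1)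
      (fun p q => 6 * c0 * p + 2 * c1 * q + 2 * a0)
      (fun p q => 2 * c2 * p + 6 * c3 * q + 2 * a2) p q where
  D0 := by fun_prop
  Dp := by fun_prop
  Dq := by fun_prop
  hp := by
    convert hasDerivAt_cubic c0 (c1 * q + a0) (c2 * q ^ 2 + a1 * q + b0)
      (c3 * q ^ 3 + a2 * q ^ 2 + b1 * q + k) p using 1
    · ext t; ring
    · ring
  hq := by
    convert hasDerivAt_cubic c3 (c2 * p + a2) (c1 * p ^ 2 + a1 * p + b1)
      (c0 * p ^ 3 + a0 * p ^ 2 + b0 * p + k) q using 1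
    · ext t; ring
    · ring
  hpp := by
    convert hasDerivAt_cubic 0 (3 * c0) (2 * c1 * q + 2 * a0)
      (c2 * q ^ 2 + a1 * q + b0) p using 1
    · ext t; ring
    · ring
  hqq := by
    convert hasDerivAt_cubic 0 (3 * c3) (2 * c2 * p + 2 * a2)
      (c1 * p ^ 2 + a1 * p + b1) q using 1
    · ext t; ring
    · ring

lemma diff_div2 {a b : ℝ × ℝ → ℝ} {v : ℝ × ℝ} (ha : DifferentiableAt ℝ a v)
    (hb : DifferentiableAt ℝ b v) (h0 : b v ≠ 0) : DifferentiableAt ℝ (fun v => a v / b v) v := by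
  simp only [div_eq_mul_inv]
  exact ha.mul (hb.inv h0)

lemma R2.div {n np nq npp nqq d dp dq dpp dqq : ℝ → ℝ → ℝ} {p q : ℝ}
    (hn : R2 n np nq npp nqq p q) (hd : R2 d dp dq dpp dqq p q) (h0 : d p q ≠ 0) :
    R2 (fun p q => n p q / d p q)
      (fun p q => (np p q * d p q - n p q * dp p q) / d p q ^ 2)
      (fun p q => (nq p q * d p q - n p q * dq p q) / d p q ^ 2)
      (fun p q => npp p q / d p q - 2 * np p q * dp p q / d p q ^ 2
        - n p q * dpp p q / d p q ^ 2 + 2 * n p q * dp p q ^ 2 / d p q ^ 3)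
      (fun p q => nqq p q / d p q - 2 * nq p q * dq p q / d p q ^ 2
        - n p q * dqq p q / d p q ^ 2 + 2 * n p q * dq p q ^ 2 / d p q ^ 3) p q where
  D0 := diff_div2 hn.D0 hd.D0 h0
  Dp := diff_div2 ((hn.Dp.mul hd.D0).sub (hn.D0.mul hd.Dp)) (hd.D0.pow 2)
    (pow_ne_zero 2 h0)
  Dq := diff_div2 ((hn.Dq.mul hd.D0).sub (hn.D0.mul hd.Dq)) (hd.D0.pow 2)
    (pow_ne_zero 2 h0)
  hp := hn.hp.div hd.hp h0
  hq := hn.hq.div hd.hq h0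
  hpp := by
    refine HasDerivAt.congr_deriv (HasDerivAt.div ((hn.hpp.mul hd.hp).sub (hn.hp.mul hd.hpp))
      (hd.hp.pow 2) (pow_ne_zero 2 h0)) ?_
    simp
    field_simp
    ring
  hqq := by
    refine HasDerivAt.congr_deriv (HasDerivAt.div ((hn.hqq.mul hd.hq).sub (hn.hq.mul hd.hqq))
      (hd.hq.pow 2) (pow_ne_zero 2 h0)) ?_
    simp
    field_simp
    ring

lemma fderiv_fst' {F : ℝ × ℝ → ℝ} {p q c : ℝ} (hF : DifferentiableAt ℝ F (p, q))
    (h : HasDerivAt (fun t => F (t, q)) c p) : fderiv ℝ F (p, q) (1, 0) = c := by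
  have h1 : HasDerivAt (fun t : ℝ => (t, q)) ((1 : ℝ), (0 : ℝ)) p :=
    (hasDerivAt_id p).prodMk (hasDerivAt_const p q)
  exact (hF.hasFDerivAt.comp_hasDerivAt p h1).unique h

lemma fderiv_snd' {F : ℝ × ℝ → ℝ} {p q c : ℝ} (hF : DifferentiableAt ℝ F (p, q))
    (h : HasDerivAt (fun t => F (p, t)) c q) : fderiv ℝ F (p, q) (0, 1) = c := by
  have h1 : HasDerivAt (fun t : ℝ => (p, t)) ((0 : ℝ), (1 : ℝ)) q :=
    (hasDerivAt_const q p).prodMk (hasDerivAt_id q)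
  exact (hF.hasFDerivAt.comp_hasDerivAt q h1).unique h

lemma fderiv_chain {F : ℝ × ℝ → ℝ} {x : E3} (hx : x ≠ 0)
    (hF : DifferentiableAt ℝ F (pP x, qQ x)) (i : Fin 3) :
    DifferentiableAt ℝ (fun y => F (pP y, qQ y)) x ∧
    fderiv ℝ (fun y => F (pP y, qQ y)) x (EuclideanSpace.single i (1 : ℝ)) =
      fderiv ℝ F (pP x, qQ x) (1, 0) * (x i / ‖x‖ + del i) +
      fderiv ℝ F (pP x, qQ x) (0, 1) * (x i / ‖x‖ - del i) := by
  have hv := (jet_p.d0 x hx).prodMk (jet_q.d0 x hx)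
  refine ⟨DifferentiableAt.comp x hF hv, ?_⟩
  have := fderiv_comp x hF hv
  rw [show (fun y => F (pP y, qQ y)) = F ∘ fun y => (pP y, qQ y) from rfl, this,
    DifferentiableAt.fderiv_prodMk (jet_p.d0 x hx) (jet_q.d0 x hx)]
  simp only [ContinuousLinearMap.comp_apply, ContinuousLinearMap.prod_apply,
    jet_p.d1 x hx, jet_q.d1 x hx]
  generalize x.ofLp i / ‖x‖ + del i = a
  generalize x.ofLp i / ‖x‖ - del i = b
  have : (a, b) = a • ((1 : ℝ), (0 : ℝ)) + b • ((0 : ℝ), (1 : ℝ)) := by simp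
  rw [this, map_add, map_smul, map_smul]
  simp; ring

lemma pq_quad (x : E3) (hx : x ≠ 0) : 0 ≤ pP x ∧ 0 ≤ qQ x ∧ 0 < pP x + qQ x := by
  have h : |x 2| ≤ ‖x‖ := by simpa using PiLp.norm_apply_le x 2
  have h3 := norm_pos_iff.mpr hx
  rw [abs_le] at h
  refine ⟨?_, ?_, ?_⟩ <;> simp only [pP, qQ] <;> linarith

lemma grad_pq (x : E3) (hx : x ≠ 0) :
    ∑ i, (x i / ‖x‖ + del i) * (x i / ‖x‖ + del i) = 2 * pP x / ‖x‖ ∧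
    ∑ i, (x i / ‖x‖ - del i) * (x i / ‖x‖ - del i) = 2 * qQ x / ‖x‖ ∧
    ∑ i, (x i / ‖x‖ + del i) * (x i / ‖x‖ - del i) = 0 := by
  have hr : ‖x‖ ≠ 0 := by simpa using hx
  have h := normsq3 x
  simp only [Fin.sum_univ_three, del, pP, qQ]
  refine ⟨?_, ?_, ?_⟩ <;> simp <;> field_simp <;> linear_combination h

lemma grad_pz (x : E3) :
    ∑ i, ((x i / ‖x‖ + del i : ℝ) : ℂ) * eps i = zZ x / ‖x‖ ∧
    ∑ i, ((x i / ‖x‖ - del i : ℝ) : ℂ) * eps i = zZ x / ‖x‖ := by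
  simp only [Fin.sum_univ_three, del, zZ, eps]
  constructor <;> simp <;> ring

lemma jet_comp {f fp fq fpp fqq : ℝ → ℝ → ℝ}
    (h : ∀ p q, 0 ≤ p → 0 ≤ q → 0 < p + q → R2 f fp fq fpp fqq p q) :
    Jet (fun x => f (pP x) (qQ x))
      (fun i x => fp (pP x) (qQ x) * (x i / ‖x‖ + del i) + fq (pP x) (qQ x) * (x i / ‖x‖ - del i))
      (fun x => (2 * pP x * fpp (pP x) (qQ x) + 2 * qQ x * fqq (pP x) (qQ x)
        + 2 * fp (pP x) (qQ x) + 2 * fq (pP x) (qQ x)) / ‖x‖) := by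
  have H : ∀ x : E3, x ≠ 0 → R2 f fp fq fpp fqq (pP x) (qQ x) := fun x hx => by
    obtain ⟨h1, h2, h3⟩ := pq_quad x hx
    exact h _ _ h1 h2 h3
  constructor
  · intro x hx
    exact (fderiv_chain (F := fun v => f v.1 v.2) hx (H x hx).D0 0).1
  · intro x hx i
    rw [(fderiv_chain (F := fun v => f v.1 v.2) hx (H x hx).D0 i).2,
      fderiv_fst' (H x hx).D0 (H x hx).hp, fderiv_snd' (H x hx).D0 (H x hx).hq]
  · intro x hx i
    exact ((fderiv_chain (F := fun v => fp v.1 v.2) hx (H x hx).Dp 0).1.mul (jet_p.e0 x hx i)).add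
      ((fderiv_chain (F := fun v => fq v.1 v.2) hx (H x hx).Dq 0).1.mul (jet_q.e0 x hx i))
  · intro x hx
    have hr : ‖x‖ ≠ 0 := by simpa using hx
    have a1 := (fderiv_chain (F := fun v => fp v.1 v.2) hx (H x hx).Dp 0).1
    have a2 := (fderiv_chain (F := fun v => fq v.1 v.2) hx (H x hx).Dq 0).1
    simp only at a1 a2
    set c := fderiv ℝ (fun v : ℝ × ℝ => fp v.1 v.2) (pP x, qQ x) (0, 1) with hc
    set c' := fderiv ℝ (fun v : ℝ × ℝ => fq v.1 v.2) (pP x, qQ x) (1, 0) with hc'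
    have b1 : ∀ i, fderiv ℝ (fun y => fp (pP y) (qQ y)) x (EuclideanSpace.single i (1 : ℝ)) =
        fpp (pP x) (qQ x) * (x i / ‖x‖ + del i) + c * (x i / ‖x‖ - del i) := fun i => by
      rw [(fderiv_chain (F := fun v => fp v.1 v.2) hx (H x hx).Dp i).2,
        fderiv_fst' (H x hx).Dp (H x hx).hpp]
    have b2 : ∀ i, fderiv ℝ (fun y => fq (pP y) (qQ y)) x (EuclideanSpace.single i (1 : ℝ)) =
        c' * (x i / ‖x‖ + del i) + fqq (pP x) (qQ x) * (x i / ‖x‖ - del i) := fun i => by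
      rw [(fderiv_chain (F := fun v => fq v.1 v.2) hx (H x hx).Dq i).2,
        fderiv_snd' (H x hx).Dq (H x hx).hqq]
    obtain ⟨g1, g2, g3⟩ := grad_pq x hx
    have l1 := jet_p.e1 x hx
    have l2 := jet_q.e1 x hx
    have key : ∀ i, fderiv ℝ (fun x : E3 => fp (pP x) (qQ x) * (x i / ‖x‖ + del i)
          + fq (pP x) (qQ x) * (x i / ‖x‖ - del i)) x (EuclideanSpace.single i (1 : ℝ)) =
        fpp (pP x) (qQ x) * ((x i / ‖x‖ + del i) * (x i / ‖x‖ + del i)) +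
        fqq (pP x) (qQ x) * ((x i / ‖x‖ - del i) * (x i / ‖x‖ - del i)) +
        (c + c') * ((x i / ‖x‖ + del i) * (x i / ‖x‖ - del i)) +
        fp (pP x) (qQ x) * fderiv ℝ (fun x : E3 => x i / ‖x‖ + del i) x
          (EuclideanSpace.single i (1 : ℝ)) +
        fq (pP x) (qQ x) * fderiv ℝ (fun x : E3 => x i / ‖x‖ - del i) x
          (EuclideanSpace.single i (1 : ℝ)) := fun i => by
      rw [fderiv_fun_add (a1.fun_mul (jet_p.e0 x hx i)) (a2.fun_mul (jet_q.e0 x hx i)),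
        fderiv_fun_mul a1 (jet_p.e0 x hx i), fderiv_fun_mul a2 (jet_q.e0 x hx i)]
      simp only [add_apply, smul_apply, b1, b2,
        smul_eq_mul]
      ring
    rw [Finset.sum_congr rfl fun i _ => key i]
    simp only [Finset.sum_add_distrib, ← Finset.mul_sum]
    rw [g1, g2, g3, l1, l2]
    ring

lemma S0 (x : E3) (hx : x ≠ 0) (a b : ℝ) :
    ∑ i, (a * (x i / ‖x‖ + del i) + b * (x i / ‖x‖ - del i)) ^ 2 =
      (2 * pP x * a ^ 2 + 2 * qQ x * b ^ 2) / ‖x‖ := by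
  obtain ⟨g1, g2, g3⟩ := grad_pq x hx
  simp only [Fin.sum_univ_three] at *
  linear_combination a ^ 2 * g1 + b ^ 2 * g2 + 2 * a * b * g3

lemma S1 (x : E3) (hx : x ≠ 0) (a b c : ℝ) :
    ∑ i, Complex.normSq (c • eps i + (a * (x i / ‖x‖ + del i) + b * (x i / ‖x‖ - del i)) • zZ x) =
      pP x * qQ x * ((2 * pP x * a ^ 2 + 2 * qQ x * b ^ 2 + 2 * c * (a + b)) / ‖x‖)
        + 2 * c ^ 2 := by
  have h0 := S0 x hx a b
  have hz := zZ_sq x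
  simp only [Fin.sum_univ_three, eps, zZ, Complex.normSq_apply] at *
  simp [del] at *
  linear_combination (x 0 ^ 2 + x 1 ^ 2) * h0 +
    ((2 * pP x * a ^ 2 + 2 * qQ x * b ^ 2 + 2 * c * (a + b)) / ‖x‖) * hz

lemma S2 (x : E3) (hx : x ≠ 0) (a b c : ℝ) :
    ∑ i, Complex.normSq (c • (2 * zZ x * eps i) +
        (a * (x i / ‖x‖ + del i) + b * (x i / ‖x‖ - del i)) • zZ x ^ 2) =
      pP x * qQ x * (pP x * qQ x * ((2 * pP x * a ^ 2 + 2 * qQ x * b ^ 2 + 4 * c * (a + b)) / ‖x‖)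
        + 8 * c ^ 2) := by
  have h := S1 x hx a b (2 * c)
  have : ∀ i, (c • (2 * zZ x * eps i) +
        (a * (x i / ‖x‖ + del i) + b * (x i / ‖x‖ - del i)) • zZ x ^ 2) =
      zZ x * ((2 * c) • eps i + (a * (x i / ‖x‖ + del i) + b * (x i / ‖x‖ - del i)) • zZ x) := by
    intro i
    simp only [Complex.real_smul]; push_cast; ring
  simp only [this, Complex.normSq_mul, ← Finset.mul_sum, h, zZ_sq]
  ring

/-- the ansatz -/
def Gm (f0 f1 f2 : ℝ → ℝ → ℝ) (μ1 μ2 : ℂ) (x : E3) : V5 :=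
  (f0 (pP x) (qQ x), μ1 * (f1 (pP x) (qQ x) • zZ x), μ2 * (f2 (pP x) (qQ x) • zZ x ^ 2))

def Lk (k : ℝ) (fp fq fpp fqq : ℝ → ℝ → ℝ) (p q : ℝ) : ℝ :=
  (2 * p * fpp p q + 2 * q * fqq p q + 2 * (1 + k) * (fp p q + fq p q)) / ((p + q) / 2)

def Ek (k : ℝ) (f fp fq : ℝ → ℝ → ℝ) (p q : ℝ) : ℝ :=
  (2 * p * fp p q ^ 2 + 2 * q * fq p q ^ 2 + 2 * k * f p q * (fp p q + fq p q)) / ((p + q) / 2)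

lemma Gm_calc {f0 f0p f0q f0pp f0qq f1 f1p f1q f1pp f1qq f2 f2p f2q f2pp f2qq : ℝ → ℝ → ℝ}
    (h0 : ∀ p q, 0 ≤ p → 0 ≤ q → 0 < p + q → R2 f0 f0p f0q f0pp f0qq p q)
    (h1 : ∀ p q, 0 ≤ p → 0 ≤ q → 0 < p + q → R2 f1 f1p f1q f1pp f1qq p q)
    (h2 : ∀ p q, 0 ≤ p → 0 ≤ q → 0 < p + q → R2 f2 f2p f2q f2pp f2qq p q)
    (μ1 μ2 : ℂ) {w : E3 → V5} (hw : ∀ x, x ≠ 0 → w x = Gm f0 f1 f2 μ1 μ2 x)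
    (x : E3) (hx : x ≠ 0) :
    lap w x = (Lk 0 f0p f0q f0pp f0qq (pP x) (qQ x),
      μ1 * (Lk 1 f1p f1q f1pp f1qq (pP x) (qQ x) • zZ x),
      μ2 * (Lk 2 f2p f2q f2pp f2qq (pP x) (qQ x) • zZ x ^ 2)) ∧
    gradSq w x = Ek 0 f0 f0p f0q (pP x) (qQ x) +
      Complex.normSq μ1 * (pP x * qQ x * Ek 1 f1 f1p f1q (pP x) (qQ x)
        + 2 * f1 (pP x) (qQ x) ^ 2) +
      Complex.normSq μ2 * (pP x * qQ x * (pP x * qQ x * Ek 2 f2 f2p f2q (pP x) (qQ x)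
        + 8 * f2 (pP x) (qQ x) ^ 2)) := by
  have J := (jet_comp h0).pair ((((jet_comp h1).smul jet_z).cmul μ1).pair
    (((jet_comp h2).smul jet_z2).cmul μ2))
  have hr : ‖x‖ ≠ 0 := by simpa using hx
  have hrC : (‖x‖ : ℂ) ≠ 0 := by exact_mod_cast hr
  obtain ⟨e1, e2⟩ := J.lap_eq hw x hx
  have hpq : (pP x + qQ x) / 2 = ‖x‖ := by simp only [pP, qQ]; ring
  rw [e1, e2]
  obtain ⟨g1, g2, g3⟩ := grad_pq x hx
  obtain ⟨k1, k2⟩ := grad_pz x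
  have kk : ∀ a b : ℝ, ∑ i, ((a * (x i / ‖x‖ + del i) + b * (x i / ‖x‖ - del i) : ℝ) : ℂ) * eps i
      = ((a + b : ℝ) : ℂ) * (zZ x / ‖x‖) := by
    intro a b
    have : ∀ i, ((a * (x i / ‖x‖ + del i) + b * (x i / ‖x‖ - del i) : ℝ) : ℂ) * eps i =
      a * (((x i / ‖x‖ + del i : ℝ) : ℂ) * eps i) + b * (((x i / ‖x‖ - del i : ℝ) : ℂ) * eps i) := by
      intro i; push_cast; ring
    rw [Finset.sum_congr rfl fun i _ => this i, Finset.sum_add_distrib, ← Finset.mul_sum,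
      ← Finset.mul_sum, k1, k2]
    push_cast; ring
  constructor
  · refine Prod.ext ?_ (Prod.ext ?_ ?_)
    · simp only [Lk, hpq]; ring
    · simp only [Complex.real_smul, kk, Lk, hpq]
      push_cast; field_simp; ring
    · have := kk (f2p (pP x) (qQ x)) (f2q (pP x) (qQ x))
      have h3 : ∀ i, ((f2p (pP x) (qQ x) * (x i / ‖x‖ + del i) +
          f2q (pP x) (qQ x) * (x i / ‖x‖ - del i) : ℝ) : ℂ) * (2 * zZ x * eps i) =
          (2 * zZ x) * (((f2p (pP x) (qQ x) * (x i / ‖x‖ + del i) +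
          f2q (pP x) (qQ x) * (x i / ‖x‖ - del i) : ℝ) : ℂ) * eps i) := fun i => by ring
      simp only [Complex.real_smul, h3, ← Finset.mul_sum, kk, Lk, hpq]
      push_cast; field_simp; ring
  · simp only [nsq, Ek, hpq, Finset.sum_add_distrib, Complex.normSq_mul, ← Finset.mul_sum]
    rw [S0 x hx, S1 x hx, S2 x hx]
    ring

lemma harm_of {f0 f0p f0q f0pp f0qq f1 f1p f1q f1pp f1qq f2 f2p f2q f2pp f2qq : ℝ → ℝ → ℝ}
    (h0 : ∀ p q, 0 ≤ p → 0 ≤ q → 0 < p + q → R2 f0 f0p f0q f0pp f0qq p q)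
    (h1 : ∀ p q, 0 ≤ p → 0 ≤ q → 0 < p + q → R2 f1 f1p f1q f1pp f1qq p q)
    (h2 : ∀ p q, 0 ≤ p → 0 ≤ q → 0 < p + q → R2 f2 f2p f2q f2pp f2qq p q)
    (μ1 μ2 : ℂ) (e : ℝ → ℝ → ℝ)
    (i0 : ∀ p q, 0 ≤ p → 0 ≤ q → 0 < p + q → Lk 0 f0p f0q f0pp f0qq p q + e p q * f0 p q = 0)
    (i1 : ∀ p q, 0 ≤ p → 0 ≤ q → 0 < p + q → Lk 1 f1p f1q f1pp f1qq p q + e p q * f1 p q = 0)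
    (i2 : ∀ p q, 0 ≤ p → 0 ≤ q → 0 < p + q → Lk 2 f2p f2q f2pp f2qq p q + e p q * f2 p q = 0)
    (i3 : ∀ p q, 0 ≤ p → 0 ≤ q → 0 < p + q →
      Ek 0 f0 f0p f0q p q + Complex.normSq μ1 * (p * q * Ek 1 f1 f1p f1q p q + 2 * f1 p q ^ 2) +
      Complex.normSq μ2 * (p * q * (p * q * Ek 2 f2 f2p f2q p q + 8 * f2 p q ^ 2)) = e p q)
    {w : E3 → V5} (hw : ∀ x, x ≠ 0 → w x = Gm f0 f1 f2 μ1 μ2 x)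
    (x : E3) (hx : x ≠ 0) :
    lap w x + gradSq w x • w x = 0 ∧ gradSq w x = e (pP x) (qQ x) := by
  obtain ⟨e1, e2⟩ := Gm_calc h0 h1 h2 μ1 μ2 hw x hx
  obtain ⟨a, b, c⟩ := pq_quad x hx
  rw [i3 _ _ a b c] at e2
  refine ⟨?_, e2⟩
  rw [e1, e2, hw x hx, Gm]
  have j0 := i0 _ _ a b c
  have j1 := i1 _ _ a b c
  have j2 := i2 _ _ a b c
  refine Prod.ext ?_ (Prod.ext ?_ ?_)
  · simpa using j0
  · simp only [Prod.snd_add, Prod.fst_add, Prod.smul_snd, Prod.smul_fst]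
    simp only [Complex.real_smul]
    have : ((Lk 1 f1p f1q f1pp f1qq (pP x) (qQ x) : ℝ) : ℂ) +
      (e (pP x) (qQ x) : ℂ) * (f1 (pP x) (qQ x) : ℂ) = 0 := by exact_mod_cast j1
    simp only [Prod.snd_zero, Prod.fst_zero]
    linear_combination μ1 * zZ x * this
  · simp only [Prod.snd_add, Prod.smul_snd]
    simp only [Complex.real_smul]
    have : ((Lk 2 f2p f2q f2pp f2qq (pP x) (qQ x) : ℝ) : ℂ) +
      (e (pP x) (qQ x) : ℂ) * (f2 (pP x) (qQ x) : ℂ) = 0 := by exact_mod_cast j2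
    simp only [Prod.snd_zero]
    linear_combination μ2 * zZ x ^ 2 * this

def dG (A B p q : ℝ) : ℝ := p ^ 3 + A * p ^ 2 * q + B * p * q ^ 2 + A * B / 9 * q ^ 3
def eG (A B p q : ℝ) : ℝ :=
  8 * (A * p ^ 4 + 4 * B * p ^ 3 * q + 2 * A * B * p ^ 2 * q ^ 2 + 4 / 9 * A ^ 2 * B * p * q ^ 3
    + 1 / 9 * A * B ^ 2 * q ^ 4) / dG A B p q ^ 2
def fG0 (A B p q : ℝ) : ℝ :=
  (p ^ 3 - A * p ^ 2 * q - B * p * q ^ 2 + A * B / 9 * q ^ 3) / dG A B p q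
def fG1 (A B p q : ℝ) : ℝ := 2 * (p ^ 2 - B / 3 * q ^ 2) / dG A B p q
def fG2 (A B p q : ℝ) : ℝ := 2 * (p + A / 3 * q) / dG A B p q

lemma dG_pos {A B p q : ℝ} (hA : 0 < A) (hB : 0 < B) (hp : 0 ≤ p) (hq : 0 ≤ q) (h : 0 < p + q) :
    0 < dG A B p q := by
  unfold dG
  rcases hp.lt_or_eq with h1 | h1
  · positivity
  · subst h1
    have : 0 < q := by linarith
    positivity

set_option maxHeartbeats 4000000 in
lemma harm_gen (μ1 μ2 : ℂ) (n1 : μ1 ≠ 0) (n2 : μ2 ≠ 0) {w : E3 → V5}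
    (hw : ∀ x, x ≠ 0 → w x = Gm (fG0 (Complex.normSq μ1) (Complex.normSq μ2))
      (fG1 (Complex.normSq μ1) (Complex.normSq μ2))
      (fG2 (Complex.normSq μ1) (Complex.normSq μ2)) μ1 μ2 x)
    (x : E3) (hx : x ≠ 0) :
    lap w x + gradSq w x • w x = 0 ∧
      gradSq w x = eG (Complex.normSq μ1) (Complex.normSq μ2) (pP x) (qQ x) := by
  have hA := Complex.normSq_pos.mpr n1
  have hB := Complex.normSq_pos.mpr n2
  have hd : ∀ p q, 0 ≤ p → 0 ≤ q → 0 < p + q →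
      dG (Complex.normSq μ1) (Complex.normSq μ2) p q ≠ 0 :=
    fun p q hp hq h => (dG_pos hA hB hp hq h).ne'
  generalize hAA : Complex.normSq μ1 = A at *
  generalize hBB : Complex.normSq μ2 = B at *
  have D := R2_poly 1 A B (A * B / 9) 0 0 0 0 0 0
  have N0 := R2_poly 1 (-A) (-B) (A * B / 9) 0 0 0 0 0 0
  have N1 := R2_poly 0 0 0 0 2 0 (-2 * B / 3) 0 0 0
  have N2 := R2_poly 0 0 0 0 0 0 0 2 (2 * A / 3) 0
  have hd' : ∀ p q, 0 ≤ p → 0 ≤ q → 0 < p + q → 1 * p ^ 3 + A * p ^ 2 * q + B * p * q ^ 2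
      + A * B / 9 * q ^ 3 + 0 * p ^ 2 + 0 * p * q + 0 * q ^ 2 + 0 * p + 0 * q + 0 ≠ 0 := by
    intro p q hp hq h
    have := hd p q hp hq h
    rw [dG] at this
    simpa using this
  refine harm_of (fun p q hp hq h => (N0 p q).div (D p q) (hd' p q hp hq h))
    (fun p q hp hq h => (N1 p q).div (D p q) (hd' p q hp hq h))
    (fun p q hp hq h => (N2 p q).div (D p q) (hd' p q hp hq h)) μ1 μ2 (eG A B) ?_ ?_ ?_ ?_ ?_ x hx
  · intro p q hp hq h
    have h1 := hd p q hp hq h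
    have h2 := h.ne'
    simp only [Lk, eG, dG, zero_mul, mul_zero, add_zero, zero_add, one_mul] at *
    field_simp
    ring
  · intro p q hp hq h
    have h1 := hd p q hp hq h
    have h2 := h.ne'
    simp only [Lk, eG, dG, zero_mul, mul_zero, add_zero, zero_add, one_mul] at *
    field_simp
    ring
  · intro p q hp hq h
    have h1 := hd p q hp hq h
    have h2 := h.ne'
    simp only [Lk, eG, dG, zero_mul, mul_zero, add_zero, zero_add, one_mul] at *
    field_simp
    ring
  · intro p q hp hq h
    have h1 := hd p q hp hq h
    have h2 := h.ne'
    rw [hAA, hBB]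
    simp only [Ek, eG, dG, zero_mul, mul_zero, add_zero, zero_add, one_mul] at *
    obtain ⟨E, hE⟩ : ∃ E, E = p ^ 3 + A * p ^ 2 * q + B * p * q ^ 2 + A * B / 9 * q ^ 3 := ⟨_, rfl⟩
    rw [← hE] at h1 ⊢
    field_simp
    subst hE
    ring
  · intro x hx
    rw [hw x hx, Gm, Gm, fG0, fG1, fG2]
    refine Prod.ext ?_ (Prod.ext ?_ ?_)
    · simp only [dG]; ring
    · simp only [dG, Complex.real_smul]; push_cast; ring
    · simp only [dG, Complex.real_smul]; push_cast; ring


/-- case B = 0 -/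
lemma harm_B0 (μ1 : ℂ) (n1 : μ1 ≠ 0) {w : E3 → V5}
    (hw : ∀ x, x ≠ 0 → w x = Gm (fun p q => (p - Complex.normSq μ1 * q) / (p + Complex.normSq μ1 * q))
      (fun p q => 2 / (p + Complex.normSq μ1 * q)) (fun _ _ => 0) μ1 0 x)
    (x : E3) (hx : x ≠ 0) :
    lap w x + gradSq w x • w x = 0 := by
  have hA := Complex.normSq_pos.mpr n1
  have hd : ∀ p q, 0 ≤ p → 0 ≤ q → 0 < p + q → p + Complex.normSq μ1 * q ≠ 0 := by
    intro p q hp hq h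
    rcases hp.lt_or_eq with h1 | h1
    · positivity
    · subst h1
      have : 0 < q := by linarith
      positivity
  generalize hAA : Complex.normSq μ1 = A at *
  have D := R2_poly 0 0 0 0 0 0 0 1 A 0
  have N0 := R2_poly 0 0 0 0 0 0 0 1 (-A) 0
  have N1 := R2_poly 0 0 0 0 0 0 0 0 0 2
  have N2 := R2_poly 0 0 0 0 0 0 0 0 0 0
  simp only [zero_mul, mul_zero, add_zero, zero_add, one_mul] at D N0 N1 N2
  refine (harm_of (fun p q hp hq h => (N0 p q).div (D p q) (hd p q hp hq h))
    (fun p q hp hq h => (N1 p q).div (D p q) (hd p q hp hq h))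
    (fun p q hp hq h => N2 p q) μ1 0 (fun p q => 8 * A / (p + A * q) ^ 2) ?_ ?_ ?_ ?_ ?_ x hx).1
  · intro p q hp hq h
    have h1 := hd p q hp hq h
    have h2 := h.ne'
    simp only [Lk]
    field_simp
    ring
  · intro p q hp hq h
    have h1 := hd p q hp hq h
    have h2 := h.ne'
    simp only [Lk]
    field_simp
    ring
  · intro p q hp hq h
    simp [Lk]
  · intro p q hp hq h
    have h1 := hd p q hp hq h
    have h2 := h.ne'
    rw [hAA]
    simp only [Ek, map_zero, zero_mul]
    field_simp
    ring
  · intro x hx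
    rw [hw x hx, Gm, Gm]
    refine Prod.ext ?_ (Prod.ext ?_ ?_)
    · simp only []; ring
    · rfl
    · rfl

/-- case A = 0 -/
lemma harm_A0 (μ2 : ℂ) (n2 : μ2 ≠ 0) {w : E3 → V5}
    (hw : ∀ x, x ≠ 0 → w x = Gm
      (fun p q => (p ^ 2 - Complex.normSq μ2 * q ^ 2) / (p ^ 2 + Complex.normSq μ2 * q ^ 2))
      (fun _ _ => 0) (fun p q => 2 / (p ^ 2 + Complex.normSq μ2 * q ^ 2)) 0 μ2 x)
    (x : E3) (hx : x ≠ 0) :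
    lap w x + gradSq w x • w x = 0 := by
  have hA := Complex.normSq_pos.mpr n2
  have hd : ∀ p q, 0 ≤ p → 0 ≤ q → 0 < p + q → p ^ 2 + Complex.normSq μ2 * q ^ 2 ≠ 0 := by
    intro p q hp hq h
    rcases hp.lt_or_eq with h1 | h1
    · positivity
    · subst h1
      have : 0 < q := by linarith
      positivity
  generalize hAA : Complex.normSq μ2 = B at *
  have D := R2_poly 0 0 0 0 1 0 B 0 0 0
  have N0 := R2_poly 0 0 0 0 1 0 (-B) 0 0 0
  have N1 := R2_poly 0 0 0 0 0 0 0 0 0 2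
  have N2 := R2_poly 0 0 0 0 0 0 0 0 0 0
  simp only [zero_mul, mul_zero, add_zero, zero_add, one_mul] at D N0 N1 N2
  refine (harm_of (fun p q hp hq h => (N0 p q).div (D p q) (hd p q hp hq h))
    (fun p q hp hq h => N2 p q)
    (fun p q hp hq h => (N1 p q).div (D p q) (hd p q hp hq h))
     0 μ2 (fun p q => 32 * B * p * q / (p ^ 2 + B * q ^ 2) ^ 2) ?_ ?_ ?_ ?_ ?_ x hx).1
  · intro p q hp hq h
    have h1 := hd p q hp hq h
    have h2 := h.ne'
    simp only [Lk]
    field_simp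
    ring
  · intro p q hp hq h
    simp [Lk]
  · intro p q hp hq h
    have h1 := hd p q hp hq h
    have h2 := h.ne'
    simp only [Lk]
    field_simp
    ring
  · intro p q hp hq h
    have h1 := hd p q hp hq h
    have h2 := h.ne'
    rw [hAA]
    simp only [Ek, map_zero, zero_mul]
    field_simp
    ring
  · intro x hx
    rw [hw x hx, Gm, Gm]
    refine Prod.ext ?_ (Prod.ext ?_ ?_)
    · simp only []; ring
    · rfl
    · rfl

lemma lift_eq (μ1 μ2 z0 z1 : ℂ) : liftCurve μ1 μ2 z0 z1 = explicitFam μ1 μ2 z0 z1 := by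
  have hD : Complex.normSq (z0 ^ 3) + Complex.normSq (μ1 * z0 ^ 2 * z1) +
      Complex.normSq (μ2 * z0 * z1 ^ 2) + Complex.normSq (-(μ1 * μ2 / 3) * z1 ^ 3) =
      Dfun μ1 μ2 z0 z1 := by
    simp only [Dfun, map_mul, map_pow, Complex.normSq_neg, map_div₀, Complex.normSq_ofNat]
    ring
  rw [liftCurve, tau4, explicitFam, hD]
  refine Prod.ext ?_ (Prod.ext ?_ ?_)
  · simp only [map_mul, map_pow, Complex.normSq_neg, map_div₀, Complex.normSq_ofNat]
    congr 1; ring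
  · simp only [conj']
    congr 1
    push_cast
    simp only [Complex.normSq_eq_conj_mul_self, map_mul, map_pow]
    ring
  · simp only [conj']
    congr 1
    push_cast
    simp only [Complex.normSq_eq_conj_mul_self, map_mul, map_pow]
    ring

lemma expl_eq (μ1 μ2 ζ : ℂ) (p q : ℝ) (hp : p ≠ 0) (hz : Complex.normSq ζ = p * q) :
    explicitFam μ1 μ2 (p : ℂ) ζ = (fG0 (Complex.normSq μ1) (Complex.normSq μ2) p q,
      μ1 * (fG1 (Complex.normSq μ1) (Complex.normSq μ2) p q • ζ),
      μ2 * (fG2 (Complex.normSq μ1) (Complex.normSq μ2) p q • ζ ^ 2)) := by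
  have hD : Dfun μ1 μ2 (p : ℂ) ζ = p ^ 3 * dG (Complex.normSq μ1) (Complex.normSq μ2) p q := by
    simp only [Dfun, dG, Complex.normSq_ofReal, hz]; ring
  have hpC : (p : ℂ) ≠ 0 := by exact_mod_cast hp
  have hp3 : p ^ 3 ≠ 0 := pow_ne_zero 3 hp
  have hpC3 : (p : ℂ) ^ 3 ≠ 0 := pow_ne_zero 3 hpC
  rw [explicitFam, hD, hz]
  by_cases h0 : dG (Complex.normSq μ1) (Complex.normSq μ2) p q = 0
  · simp [fG0, fG1, fG2, h0]
  generalize hd : dG (Complex.normSq μ1) (Complex.normSq μ2) p q = d at h0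
  have h0C : (d : ℂ) ≠ 0 := by exact_mod_cast h0
  refine Prod.ext ?_ (Prod.ext ?_ ?_)
  · simp only [fG0, Complex.normSq_ofReal, hd]
    field_simp
  · simp only [fG1, Complex.normSq_ofReal, conj', Complex.conj_ofReal, Complex.real_smul, hd]
    push_cast
    field_simp
  · simp only [fG2, Complex.normSq_ofReal, conj', Complex.conj_ofReal, Complex.real_smul, hd]
    push_cast
    field_simp

lemma sph_norm {x : E3} (hx : x ∈ sphere2) : ‖x‖ = 1 := by simpa [sphere2] using hx

lemma sph_ne {x : E3} (hx : x ∈ sphere2) : x ≠ 0 := by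
  rintro rfl; simpa using sph_norm hx

lemma pP_south {x : E3} (hx : x ∈ sphere2) : pP x = 0 ↔ x = southPole := by
  have h1 := sph_norm hx
  have h2 := normsq3 x
  constructor
  · intro h
    have h3 : x 2 = -1 := by simp only [pP, h1] at h; linarith
    rw [h1, h3] at h2
    have h4 : x 0 = 0 := by nlinarith [sq_nonneg (x 0), sq_nonneg (x 1)]
    have h5 : x 1 = 0 := by nlinarith [sq_nonneg (x 0), sq_nonneg (x 1)]
    ext i
    fin_cases i <;> simp [southPole, h3, h4, h5]
  · rintro rfl
    simp only [pP, h1]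
    simp [southPole]

lemma south_vals {x : E3} (hx : x ∈ sphere2) (h : x = southPole) :
    pP x = 0 ∧ qQ x = 2 ∧ zZ x = 0 := by
  have h1 := sph_norm hx
  subst h
  refine ⟨?_, ?_, ?_⟩
  · simp only [pP, h1]; simp [southPole]
  · simp only [qQ, h1]; simp [southPole]; norm_num
  · simp [zZ, southPole]

lemma omega_ne (μ1 μ2 : ℂ) {x : E3} (hx : x ∈ sphere2) (h : x ≠ southPole) :
    omegaFam μ1 μ2 x = Gm (fG0 (Complex.normSq μ1) (Complex.normSq μ2))
      (fG1 (Complex.normSq μ1) (Complex.normSq μ2))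
      (fG2 (Complex.normSq μ1) (Complex.normSq μ2)) μ1 μ2 x := by
  have hp : pP x ≠ 0 := fun h' => h ((pP_south hx).1 h')
  rw [omegaFam, if_neg h, lift_eq, Gm]
  have := expl_eq μ1 μ2 (zZ x) (pP x) (qQ x) hp (zZ_sq x)
  rw [← this]
  simp only [pP, zZ, sph_norm hx]

lemma Gm_smul {f0 f1 f2 : ℝ → ℝ → ℝ} (μ1 μ2 : ℂ) {c : ℝ} (hc : 0 < c)
    (h0 : ∀ p q, f0 (c * p) (c * q) = f0 p q)
    (h1 : ∀ p q, f1 (c * p) (c * q) = f1 p q / c)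
    (h2 : ∀ p q, f2 (c * p) (c * q) = f2 p q / c ^ 2) (x : E3) :
    Gm f0 f1 f2 μ1 μ2 (c • x) = Gm f0 f1 f2 μ1 μ2 x := by
  have a : pP (c • x) = c * pP x := by
    simp [pP, norm_smul, abs_of_pos hc]; ring
  have b : qQ (c • x) = c * qQ x := by
    simp [qQ, norm_smul, abs_of_pos hc]; ring
  have d : zZ (c • x) = c * zZ x := by simp [zZ]; ring
  have hcC : (c : ℂ) ≠ 0 := by exact_mod_cast hc.ne'
  rw [Gm, Gm, a, b, d, h0, h1, h2]
  refine Prod.ext rfl (Prod.ext ?_ ?_)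
  · simp only [Complex.real_smul]; push_cast; field_simp
  · simp only [Complex.real_smul]; push_cast; field_simp

lemma homExt_eq {ω : E3 → V5} {f0 f1 f2 : ℝ → ℝ → ℝ} {μ1 μ2 : ℂ}
    (hS : ∀ x ∈ sphere2, ω x = Gm f0 f1 f2 μ1 μ2 x)
    (h0 : ∀ c, 0 < c → ∀ p q, f0 (c * p) (c * q) = f0 p q)
    (h1 : ∀ c, 0 < c → ∀ p q, f1 (c * p) (c * q) = f1 p q / c)
    (h2 : ∀ c, 0 < c → ∀ p q, f2 (c * p) (c * q) = f2 p q / c ^ 2) (x : E3) (hx : x ≠ 0) :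
    homExt ω x = Gm f0 f1 f2 μ1 μ2 x := by
  have hr := norm_pos_iff.mpr hx
  have hc : 0 < ‖x‖⁻¹ := inv_pos.mpr hr
  rw [homExt, hS, Gm_smul μ1 μ2 hc (h0 _ hc) (h1 _ hc) (h2 _ hc)]
  simp [sphere2, norm_smul, hr.ne']

lemma nsq_Gm (f0 f1 f2 : ℝ → ℝ → ℝ) (μ1 μ2 : ℂ) (x : E3) :
    nsq (Gm f0 f1 f2 μ1 μ2 x) = f0 (pP x) (qQ x) ^ 2 +
      Complex.normSq μ1 * f1 (pP x) (qQ x) ^ 2 * (pP x * qQ x) +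
      Complex.normSq μ2 * f2 (pP x) (qQ x) ^ 2 * (pP x * qQ x) ^ 2 := by
  simp only [nsq, Gm, Complex.real_smul, map_mul, map_pow, Complex.normSq_ofReal, zZ_sq]
  ring

lemma smooth_Gm {w : E3 → V5} {f0 f1 f2 : ℝ → ℝ → ℝ} {μ1 μ2 : ℂ}
    (hw : ∀ x, x ≠ 0 → w x = Gm f0 f1 f2 μ1 μ2 x)
    (h0 : ∀ p q, 0 ≤ p → 0 ≤ q → 0 < p + q →
      ContDiffAt ℝ (⊤ : ℕ∞) (fun v : ℝ × ℝ => f0 v.1 v.2) (p, q))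
    (h1 : ∀ p q, 0 ≤ p → 0 ≤ q → 0 < p + q →
      ContDiffAt ℝ (⊤ : ℕ∞) (fun v : ℝ × ℝ => f1 v.1 v.2) (p, q))
    (h2 : ∀ p q, 0 ≤ p → 0 ≤ q → 0 < p + q →
      ContDiffAt ℝ (⊤ : ℕ∞) (fun v : ℝ × ℝ => f2 v.1 v.2) (p, q)) :
    ContDiffOn ℝ (⊤ : ℕ∞) w {(0 : E3)}ᶜ := by
  have H : ContDiffOn ℝ (⊤ : ℕ∞) (Gm f0 f1 f2 μ1 μ2) {(0 : E3)}ᶜ := by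
    intro x hx
    have hx : x ≠ 0 := hx
    apply ContDiffAt.contDiffWithinAt
    have hn : ContDiffAt ℝ (⊤ : ℕ∞) (fun y : E3 => ‖y‖) x := contDiffAt_norm ℝ hx
    have hc : ∀ i : Fin 3, ContDiffAt ℝ (⊤ : ℕ∞) (fun y : E3 => y i) x := fun i =>
      (EuclideanSpace.proj i : E3 →L[ℝ] ℝ).contDiff.contDiffAt
    have hpq : ContDiffAt ℝ (⊤ : ℕ∞) (fun y : E3 => (pP y, qQ y)) x :=
      (hn.add (hc 2)).prodMk (hn.sub (hc 2))
    have hz : ContDiffAt ℝ (⊤ : ℕ∞) zZ x := by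
      have a := Complex.ofRealCLM.contDiff.contDiffAt.comp x (hc 0)
      have b := Complex.ofRealCLM.contDiff.contDiffAt.comp x (hc 1)
      exact a.add (b.mul contDiffAt_const)
    obtain ⟨a, b, c⟩ := pq_quad x hx
    have k0 : ContDiffAt ℝ (⊤ : ℕ∞) (fun y => f0 (pP y) (qQ y)) x :=
      ContDiffAt.comp (g := fun v : ℝ × ℝ => f0 v.1 v.2) x (h0 _ _ a b c) hpq
    have k1 : ContDiffAt ℝ (⊤ : ℕ∞) (fun y => f1 (pP y) (qQ y)) x :=
      ContDiffAt.comp (g := fun v : ℝ × ℝ => f1 v.1 v.2) x (h1 _ _ a b c) hpq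
    have k2 : ContDiffAt ℝ (⊤ : ℕ∞) (fun y => f2 (pP y) (qQ y)) x :=
      ContDiffAt.comp (g := fun v : ℝ × ℝ => f2 v.1 v.2) x (h2 _ _ a b c) hpq
    exact k0.prodMk ((contDiffAt_const.mul (k1.smul hz)).prodMk
      (contDiffAt_const.mul (k2.smul (hz.pow 2))))
  exact H.congr fun x hx => hw x hx

lemma gen_sphere (μ1 μ2 : ℂ) (n1 : μ1 ≠ 0) (n2 : μ2 ≠ 0) : ∀ x ∈ sphere2,
    omegaFam μ1 μ2 x = Gm (fG0 (Complex.normSq μ1) (Complex.normSq μ2))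
      (fG1 (Complex.normSq μ1) (Complex.normSq μ2))
      (fG2 (Complex.normSq μ1) (Complex.normSq μ2)) μ1 μ2 x := by
  intro x hx
  by_cases h : x = southPole
  · obtain ⟨a, b, c⟩ := south_vals hx h
    have hA := Complex.normSq_pos.mpr n1
    have hB := Complex.normSq_pos.mpr n2
    rw [omegaFam, if_pos h, if_neg (by tauto), if_pos ⟨n1, n2⟩, lift_eq, Gm, a, b, c]
    refine Prod.ext ?_ (Prod.ext ?_ ?_)
    · simp [explicitFam, Dfun, fG0, dG, hA.ne', hB.ne']
    · simp [explicitFam, conj']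
    · simp [explicitFam, conj']
  · exact omega_ne μ1 μ2 hx h

lemma gen_homExt (μ1 μ2 : ℂ) (n1 : μ1 ≠ 0) (n2 : μ2 ≠ 0) (x : E3) (hx : x ≠ 0) :
    homExt (omegaFam μ1 μ2) x = Gm (fG0 (Complex.normSq μ1) (Complex.normSq μ2))
      (fG1 (Complex.normSq μ1) (Complex.normSq μ2))
      (fG2 (Complex.normSq μ1) (Complex.normSq μ2)) μ1 μ2 x := by
  have hd : ∀ A B c p q, dG A B (c * p) (c * q) = c ^ 3 * dG A B p q := by
    intros; simp only [dG]; ring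
  refine homExt_eq (gen_sphere μ1 μ2 n1 n2) ?_ ?_ ?_ x hx
  · intro c hc p q
    have := pow_ne_zero 3 hc.ne'
    rw [fG0, fG0, hd, ← mul_div_mul_left _ (dG _ _ p q) this]
    congr 1; ring
  · intro c hc p q
    have := pow_ne_zero 2 hc.ne'
    rw [fG1, fG1, hd, div_div, ← mul_div_mul_left _ (dG _ _ p q * c) this]
    congr 1 <;> ring
  · intro c hc p q
    rw [fG2, fG2, hd, div_div, ← mul_div_mul_left _ (dG _ _ p q * c ^ 2) hc.ne']
    congr 1 <;> ring

lemma gen_harm (μ1 μ2 : ℂ) (n1 : μ1 ≠ 0) (n2 : μ2 ≠ 0) : IsHarmonicSphere (omegaFam μ1 μ2) := by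
  have hA := Complex.normSq_pos.mpr n1
  have hB := Complex.normSq_pos.mpr n2
  have hE := gen_homExt μ1 μ2 n1 n2
  refine ⟨?_, ?_, fun x hx => (harm_gen μ1 μ2 n1 n2 hE x hx).1⟩
  · intro x hx
    rw [gen_sphere μ1 μ2 n1 n2 x hx, nsq_Gm]
    obtain ⟨a, b, c⟩ := pq_quad x (sph_ne hx)
    have := (dG_pos hA hB a b c).ne'
    simp only [fG0, fG1, fG2]
    field_simp
    simp only [dG]
    ring
  · have hD : ∀ A B : ℝ, ContDiff ℝ (⊤ : ℕ∞) (fun v : ℝ × ℝ => dG A B v.1 v.2) := by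
      intro A B
      simp only [dG]
      fun_prop
    refine smooth_Gm hE ?_ ?_ ?_ <;> intro p q hp hq h
    · exact ContDiffAt.div (by fun_prop) (hD _ _).contDiffAt (dG_pos hA hB hp hq h).ne'
    · exact ContDiffAt.div (by fun_prop) (hD _ _).contDiffAt (dG_pos hA hB hp hq h).ne'
    · exact ContDiffAt.div (by fun_prop) (hD _ _).contDiffAt (dG_pos hA hB hp hq h).ne'

lemma B0_sphere (μ1 : ℂ) (n1 : μ1 ≠ 0) : ∀ x ∈ sphere2,
    omegaFam μ1 0 x = Gm (fun p q => (p - Complex.normSq μ1 * q) / (p + Complex.normSq μ1 * q))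
      (fun p q => 2 / (p + Complex.normSq μ1 * q)) (fun _ _ => 0) μ1 0 x := by
  intro x hx
  have hA := Complex.normSq_pos.mpr n1
  by_cases h : x = southPole
  · obtain ⟨a, b, c⟩ := south_vals hx h
    rw [omegaFam, if_pos h, if_neg (by tauto), if_neg (by tauto), Gm, a, b, c]
    refine Prod.ext ?_ (Prod.ext ?_ ?_)
    · simp; field_simp
    · simp
    · simp
  · have hp : pP x ≠ 0 := fun h' => h ((pP_south hx).1 h')
    rw [omega_ne _ _ hx h, Gm, Gm]
    have e : ∀ A p q : ℝ, dG A 0 p q = p ^ 2 * (p + A * q) := by intros; simp only [dG]; ring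
    refine Prod.ext ?_ (Prod.ext ?_ ?_)
    · simp only [fG0, map_zero, e]
      rw [← mul_div_mul_left _ (pP x + _) (pow_ne_zero 2 hp)]
      congr 1; ring
    · simp only [fG1, map_zero, e]
      rw [← mul_div_mul_left _ (pP x + _) (pow_ne_zero 2 hp)]
      congr 3; ring
    · simp

lemma B0_harm (μ1 : ℂ) (n1 : μ1 ≠ 0) : IsHarmonicSphere (omegaFam μ1 0) := by
  have hA := Complex.normSq_pos.mpr n1
  have hd : ∀ p q, 0 ≤ p → 0 ≤ q → 0 < p + q → p + Complex.normSq μ1 * q ≠ 0 := by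
    intro p q hp hq h
    rcases hp.lt_or_eq with h1 | h1
    · positivity
    · subst h1
      have : 0 < q := by linarith
      positivity
  have hE := homExt_eq (B0_sphere μ1 n1) (by
      intro c hc p q
      rw [← mul_div_mul_left _ (p + _) hc.ne']; congr 1 <;> ring) (by
      intro c hc p q
      rw [div_div]; congr 1; ring) (by simp)
  refine ⟨?_, ?_, fun x hx => harm_B0 μ1 n1 hE x hx⟩
  · intro x hx
    rw [B0_sphere μ1 n1 x hx, nsq_Gm]
    obtain ⟨a, b, c⟩ := pq_quad x (sph_ne hx)
    have := hd _ _ a b c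
    field_simp
    simp; ring
  · refine smooth_Gm hE ?_ ?_ ?_ <;> intro p q hp hq h
    · exact ContDiffAt.div (by fun_prop) (by fun_prop) (hd _ _ hp hq h)
    · exact ContDiffAt.div (by fun_prop) (by fun_prop) (hd _ _ hp hq h)
    · exact contDiffAt_const

lemma A0_sphere (μ2 : ℂ) (n2 : μ2 ≠ 0) : ∀ x ∈ sphere2,
    omegaFam 0 μ2 x = Gm
      (fun p q => (p ^ 2 - Complex.normSq μ2 * q ^ 2) / (p ^ 2 + Complex.normSq μ2 * q ^ 2))
      (fun _ _ => 0) (fun p q => 2 / (p ^ 2 + Complex.normSq μ2 * q ^ 2)) 0 μ2 x := by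
  intro x hx
  have hA := Complex.normSq_pos.mpr n2
  by_cases h : x = southPole
  · obtain ⟨a, b, c⟩ := south_vals hx h
    rw [omegaFam, if_pos h, if_neg (by tauto), if_neg (by tauto), Gm, a, b, c]
    refine Prod.ext ?_ (Prod.ext ?_ ?_)
    · simp; field_simp
    · simp
    · simp
  · have hp : pP x ≠ 0 := fun h' => h ((pP_south hx).1 h')
    rw [omega_ne _ _ hx h, Gm, Gm]
    have e : ∀ B p q : ℝ, dG 0 B p q = p * (p ^ 2 + B * q ^ 2) := by intros; simp only [dG]; ring
    refine Prod.ext ?_ (Prod.ext ?_ ?_)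
    · simp only [fG0, map_zero, e]
      rw [← mul_div_mul_left _ (pP x ^ 2 + _) hp]
      congr 1; ring
    · simp
    · simp only [fG2, map_zero, e]
      rw [← mul_div_mul_left _ (pP x ^ 2 + _) hp]
      congr 3; ring

lemma A0_harm (μ2 : ℂ) (n2 : μ2 ≠ 0) : IsHarmonicSphere (omegaFam 0 μ2) := by
  have hA := Complex.normSq_pos.mpr n2
  have hd : ∀ p q, 0 ≤ p → 0 ≤ q → 0 < p + q → p ^ 2 + Complex.normSq μ2 * q ^ 2 ≠ 0 := by
    intro p q hp hq h
    rcases hp.lt_or_eq with h1 | h1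
    · positivity
    · subst h1
      have : 0 < q := by linarith
      positivity
  have hE := homExt_eq (A0_sphere μ2 n2) (by
      intro c hc p q
      rw [← mul_div_mul_left _ (p ^ 2 + _) (pow_ne_zero 2 hc.ne')]; congr 1 <;> ring) (by simp) (by
      intro c hc p q
      rw [div_div]; congr 1; ring)
  refine ⟨?_, ?_, fun x hx => harm_A0 μ2 n2 hE x hx⟩
  · intro x hx
    rw [A0_sphere μ2 n2 x hx, nsq_Gm]
    obtain ⟨a, b, c⟩ := pq_quad x (sph_ne hx)
    have := hd _ _ a b c
    field_simp
    simp; ring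
  · refine smooth_Gm hE ?_ ?_ ?_ <;> intro p q hp hq h
    · exact ContDiffAt.div (by fun_prop) (by fun_prop) (hd _ _ hp hq h)
    · exact contDiffAt_const
    · exact ContDiffAt.div (by fun_prop) (by fun_prop) (hd _ _ hp hq h)

/-- both zero -/
lemma Z_sphere : ∀ x ∈ sphere2, omegaFam 0 0 x = ((1 : ℝ), 0, 0) := by
  intro x hx
  by_cases h : x = southPole
  · rw [omegaFam, if_pos h, if_pos ⟨rfl, rfl⟩]
  · have hp : pP x ≠ 0 := fun h' => h ((pP_south hx).1 h')
    rw [omega_ne _ _ hx h, Gm]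
    refine Prod.ext ?_ (Prod.ext ?_ ?_)
    · simp [fG0, dG, hp]
    · simp
    · simp

lemma Z_harm : IsHarmonicSphere (omegaFam 0 0) := by
  have hE : ∀ x : E3, x ≠ 0 → homExt (omegaFam 0 0) x = ((1 : ℝ), 0, 0) := by
    intro x hx
    rw [homExt, Z_sphere]
    have hr := norm_pos_iff.mpr hx
    simp [sphere2, norm_smul, hr.ne']
  refine ⟨?_, ?_, ?_⟩
  · intro x hx
    rw [Z_sphere x hx]; simp [nsq]
  · exact contDiffOn_const.congr fun x hx => hE x hx
  · intro x hx
    obtain ⟨a, b⟩ := (jet_const (((1 : ℝ), 0, 0) : V5)).lap_eq hE x hx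
    rw [a, b]
    simp [nsq]

lemma all_harm (μ1 μ2 : ℂ) : IsHarmonicSphere (omegaFam μ1 μ2) := by
  by_cases h1 : μ1 = 0 <;> by_cases h2 : μ2 = 0
  · subst h1 h2; exact Z_harm
  · subst h1; exact A0_harm μ2 h2
  · subst h2; exact B0_harm μ1 h1
  · exact gen_harm μ1 μ2 h1 h2

lemma all_sphere (μ1 μ2 : ℂ) : ∃ f0 f1 f2 : ℝ → ℝ → ℝ, ∀ x ∈ sphere2,
    omegaFam μ1 μ2 x = Gm f0 f1 f2 μ1 μ2 x := by
  by_cases h1 : μ1 = 0 <;> by_cases h2 : μ2 = 0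
  · subst h1 h2
    refine ⟨fun _ _ => 1, fun _ _ => 0, fun _ _ => 0, fun x hx => ?_⟩
    rw [Z_sphere x hx]; simp [Gm]
  · subst h1; exact ⟨_, _, _, A0_sphere μ2 h2⟩
  · subst h2; exact ⟨_, _, _, B0_sphere μ1 h1⟩
  · exact ⟨_, _, _, gen_sphere μ1 μ2 h1 h2⟩

lemma rot_coord (α : ℝ) (x : E3) : rot3 α x 0 = Real.cos α * x 0 - Real.sin α * x 1 ∧
    rot3 α x 1 = Real.sin α * x 0 + Real.cos α * x 1 ∧ rot3 α x 2 = x 2 := by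
  refine ⟨?_, ?_, ?_⟩ <;> simp [rot3]

lemma rot_norm (α : ℝ) (x : E3) : ‖rot3 α x‖ = ‖x‖ := by
  have h := normsq3 (rot3 α x)
  obtain ⟨a, b, c⟩ := rot_coord α x
  rw [a, b, c] at h
  have h2 := normsq3 x
  have h3 := Real.sin_sq_add_cos_sq α
  have : ‖rot3 α x‖ ^ 2 = ‖x‖ ^ 2 := by
    linear_combination h2 - h + (x 0 ^ 2 + x 1 ^ 2) * h3
  exact (pow_left_inj₀ (norm_nonneg _) (norm_nonneg _) two_ne_zero).1 this

lemma rot_z (α : ℝ) (x : E3) : zZ (rot3 α x) = Complex.exp (Complex.I * α) * zZ x := by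
  obtain ⟨a, b, c⟩ := rot_coord α x
  rw [zZ, zZ, a, b, mul_comm Complex.I, Complex.exp_mul_I]
  push_cast
  linear_combination (-Complex.sin α * x 1) * Complex.I_sq

lemma all_equiv (μ1 μ2 : ℂ) : EquivariantS (omegaFam μ1 μ2) := by
  intro α x hx
  obtain ⟨f0, f1, f2, h⟩ := all_sphere μ1 μ2
  have hx' : rot3 α x ∈ sphere2 := by
    have := sph_norm hx
    simp [sphere2, rot_norm, this]
  have a : pP (rot3 α x) = pP x := by simp only [pP, rot_norm, (rot_coord α x).2.2]
  have b : qQ (rot3 α x) = qQ x := by simp only [qQ, rot_norm, (rot_coord α x).2.2]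
  rw [h _ hx', h _ hx, circAct, Gm, Gm, a, b, rot_z]
  have e : Complex.exp (2 * Complex.I * α) = Complex.exp (Complex.I * α) ^ 2 := by
    rw [← Complex.exp_nat_mul]; congr 1; push_cast; ring
  refine Prod.ext rfl (Prod.ext ?_ ?_)
  · simp only [Complex.real_smul]; ring
  · simp only [Complex.real_smul, e]; ring

lemma north_sph : northPole ∈ sphere2 := by simp [sphere2, northPole]

lemma all_north (μ1 μ2 : ℂ) : omegaFam μ1 μ2 northPole = ((1 : ℝ), 0, 0) := by
  have h : northPole ≠ southPole := by
    intro h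
    have := congrArg (fun v : E3 => v 2) h
    simp [northPole, southPole] at this
    norm_num at this
  rw [omega_ne _ _ north_sph h, Gm]
  have hq : qQ northPole = 0 := by simp [qQ, northPole]
  have hp : pP northPole = 2 := by simp [pP, northPole]; norm_num
  have hz : zZ northPole = 0 := by simp [zZ, northPole]
  rw [hp, hq, hz]
  simp [fG0, dG]

lemma full_iff (μ1 μ2 : ℂ) :
    Submodule.span ℝ (omegaFam μ1 μ2 '' sphere2) = ⊤ ↔ (μ1 ≠ 0 ∧ μ2 ≠ 0) := by
  constructor
  · intro h
    obtain ⟨f0, f1, f2, hS⟩ := all_sphere μ1 μ2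
    constructor
    · rintro rfl
      have : Submodule.span ℝ (omegaFam 0 μ2 '' sphere2) ≤
          LinearMap.ker ((LinearMap.fst ℝ ℂ ℂ).comp (LinearMap.snd ℝ ℝ (ℂ × ℂ))) := by
        rw [Submodule.span_le]
        rintro _ ⟨x, hx, rfl⟩
        rw [hS x hx]; simp [Gm]
      rw [h] at this
      have := this (show ((0, 1, 0) : V5) ∈ ⊤ from trivial)
      simp at this
    · rintro rfl
      have : Submodule.span ℝ (omegaFam μ1 0 '' sphere2) ≤
          LinearMap.ker ((LinearMap.snd ℝ ℂ ℂ).comp (LinearMap.snd ℝ ℝ (ℂ × ℂ))) := by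
        rw [Submodule.span_le]
        rintro _ ⟨x, hx, rfl⟩
        rw [hS x hx]; simp [Gm]
      rw [h] at this
      have := this (show ((0, 0, 1) : V5) ∈ ⊤ from trivial)
      simp at this
  · rintro ⟨n1, n2⟩
    have hA := Complex.normSq_pos.mpr n1
    have hB := Complex.normSq_pos.mpr n2
    set W := Submodule.span ℝ (omegaFam μ1 μ2 '' sphere2) with hW
    have hN : ((1, 0, 0) : V5) ∈ W := by
      rw [← all_north μ1 μ2]
      exact Submodule.subset_span ⟨_, north_sph, rfl⟩
    obtain ⟨x, hx, hx1, hx2⟩ : ∃ x ∈ sphere2, (omegaFam μ1 μ2 x).2.1 ≠ 0 ∧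
        (omegaFam μ1 μ2 x).2.2 ≠ 0 := by
      have main : ∀ x ∈ sphere2, zZ x ≠ 0 → pP x ^ 2 - Complex.normSq μ2 / 3 * qQ x ^ 2 ≠ 0 →
          (omegaFam μ1 μ2 x).2.1 ≠ 0 ∧ (omegaFam μ1 μ2 x).2.2 ≠ 0 := by
        intro x hx hz h
        rw [gen_sphere μ1 μ2 n1 n2 x hx, Gm]
        obtain ⟨a, b, c⟩ := pq_quad x (sph_ne hx)
        have hd := (dG_pos hA hB a b c).ne'
        have h3 : pP x + Complex.normSq μ1 / 3 * qQ x ≠ 0 := by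
          have hpq : 0 < pP x * qQ x := by rw [← zZ_sq]; exact Complex.normSq_pos.mpr hz
          have : 0 < pP x := lt_of_le_of_ne a (fun h => by rw [← h] at hpq; simp at hpq)
          positivity
        constructor
        · exact mul_ne_zero n1 (smul_ne_zero (div_ne_zero (mul_ne_zero two_ne_zero h) hd) hz)
        · exact mul_ne_zero n2 (smul_ne_zero (div_ne_zero (mul_ne_zero two_ne_zero h3) hd)
            (pow_ne_zero 2 hz))
      have ptn : ∀ a b : ℝ, a ^ 2 + b ^ 2 = 1 → ‖(!₂[a, 0, b] : E3)‖ = 1 := by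
        intro a b h
        have := normsq3 (!₂[a, 0, b] : E3)
        simp at this
        rw [h] at this
        exact (pow_left_inj₀ (norm_nonneg _) zero_le_one two_ne_zero).1 (by rw [← this]; norm_num)
      by_cases hB3 : Complex.normSq μ2 = 3
      · have hn := ptn (4 / 5) (3 / 5) (by norm_num)
        refine ⟨!₂[4 / 5, 0, 3 / 5], by simpa [sphere2] using hn, main _ (by simpa [sphere2] using hn) ?_ ?_⟩
        · simp [zZ]
        · simp only [pP, qQ, hn, hB3]; simp; norm_num
      · have hn := ptn 1 0 (by norm_num)
        refine ⟨!₂[1, 0, 0], by simpa [sphere2] using hn, main _ (by simpa [sphere2] using hn) ?_ ?_⟩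
        · simp [zZ]
        · simp only [pP, qQ, hn]; simp
          intro h; apply hB3; linarith
    obtain ⟨v, hv⟩ : ∃ v, v = omegaFam μ1 μ2 x := ⟨_, rfl⟩
    have hC : ∀ α : ℝ, circAct α v ∈ W := by
      intro α
      rw [hv, ← all_equiv μ1 μ2 α x hx]
      refine Submodule.subset_span ⟨_, ?_, rfl⟩
      have := sph_norm hx
      simp [sphere2, rot_norm, this]
    rw [← hv] at hx1 hx2
    obtain ⟨t, a, b⟩ := v
    simp only at hx1 hx2
    have eP : ∀ α : ℝ, Complex.exp (Complex.I * ((α + Real.pi : ℝ) : ℂ)) =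
        - Complex.exp (Complex.I * α) := by
      intro α
      push_cast
      rw [mul_add, Complex.exp_add, mul_comm Complex.I (Real.pi : ℂ), Complex.exp_pi_mul_I]; ring
    have eP2 : ∀ α : ℝ, Complex.exp (2 * Complex.I * ((α + Real.pi : ℝ) : ℂ)) =
        Complex.exp (2 * Complex.I * α) := by
      intro α
      rw [← Complex.exp_periodic (2 * Complex.I * α)]
      congr 1; push_cast; ring
    have h1 : ∀ α : ℝ, ((0, Complex.exp (Complex.I * α) * a, 0) : V5) ∈ W := by
      intro α
      have := W.smul_mem (1 / 2 : ℝ) (W.sub_mem (hC α) (hC (α + Real.pi)))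
      convert this using 1
      simp only [circAct, eP, eP2]
      refine Prod.ext ?_ (Prod.ext ?_ ?_)
      · simp
      · simp; ring
      · simp
    have h2 : ∀ α : ℝ, ((0, 0, Complex.exp (2 * Complex.I * α) * b) : V5) ∈ W := by
      intro α
      have := W.sub_mem (W.sub_mem (hC α) (h1 α)) (W.smul_mem t hN)
      convert this using 1
      simp only [circAct]
      refine Prod.ext ?_ (Prod.ext ?_ ?_) <;> simp
    have eI : Complex.exp (Complex.I * ((Real.pi / 2 : ℝ) : ℂ)) = Complex.I := by
      rw [mul_comm]; push_cast; exact Complex.exp_pi_div_two_mul_I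
    have eI2 : Complex.exp (2 * Complex.I * ((Real.pi / 4 : ℝ) : ℂ)) = Complex.I := by
      refine Eq.trans ?_ Complex.exp_pi_div_two_mul_I; congr 1; push_cast; ring
    have a0 := h1 0
    have a1 := h1 (Real.pi / 2)
    have b0 := h2 0
    have b1 := h2 (Real.pi / 4)
    rw [eI] at a1
    rw [eI2] at b1
    rw [eq_top_iff]
    rintro ⟨s, u, w⟩ -
    have := W.add_mem (W.add_mem (W.smul_mem s hN)
      (W.add_mem (W.smul_mem (u / a).re a0) (W.smul_mem (u / a).im a1)))
      (W.add_mem (W.smul_mem (w / b).re b0) (W.smul_mem (w / b).im b1))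
    convert this using 1
    have key : ∀ u a : ℂ, a ≠ 0 → u = ((u / a).re : ℂ) * a + ((u / a).im : ℂ) * (Complex.I * a) := by
      intro u a ha
      calc u = (u / a) * a := by field_simp
        _ = (((u / a).re : ℂ) + ((u / a).im : ℂ) * Complex.I) * a := by rw [Complex.re_add_im]
        _ = _ := by ring
    refine Prod.ext ?_ (Prod.ext ?_ ?_)
    · simp
    · simpa using key u a hx1
    · simpa using key w b hx2

open scoped ENNReal in
lemma cyl_coord (H : ℝ × ℝ → ℝ≥0∞) (hH : Measurable H) :
    ∫⁻ x : E3, H (x 2, √(x 0 ^ 2 + x 1 ^ 2)) =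
      ENNReal.ofReal (2 * Real.pi) * ∫⁻ v : ℝ × ℝ, ENNReal.ofReal v.2 * H v := by
  have m1 := EuclideanSpace.volume_preserving_symm_measurableEquiv_toLp (Fin 3)
  have m2 := volume_preserving_piFinSuccAbove (fun _ : Fin 3 => ℝ) 2
  have m3 : MeasurePreserving (Prod.map (id : ℝ → ℝ) (MeasurableEquiv.finTwoArrow (α := ℝ)))
      (volume : Measure (ℝ × (Fin 2 → ℝ))) (volume : Measure (ℝ × ℝ × ℝ)) :=
    (MeasurePreserving.id volume).prod (volume_preserving_finTwoArrow ℝ)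
  have m := m3.comp (m2.comp m1)
  have hF : Measurable (fun y : ℝ × ℝ × ℝ => H (y.1, √(y.2.1 ^ 2 + y.2.2 ^ 2))) := by
    fun_prop
  have e1 := m.lintegral_comp hF
  have e2 : ∫⁻ x : E3, H (x 2, √(x 0 ^ 2 + x 1 ^ 2)) =
      ∫⁻ y : ℝ × ℝ × ℝ, H (y.1, √(y.2.1 ^ 2 + y.2.2 ^ 2)) := by
    rw [← e1]
    rfl
  rw [e2, Measure.volume_eq_prod, lintegral_prod _ hF.aemeasurable]
  have e3 : ∀ t : ℝ, ∫⁻ y : ℝ × ℝ, H (t, √(y.1 ^ 2 + y.2 ^ 2)) =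
      ENNReal.ofReal (2 * Real.pi) * ∫⁻ r : ℝ, ENNReal.ofReal r * H (t, r) := by
    intro t
    rw [← lintegral_comp_polarCoord_symm]
    have hm : Measurable fun r : ℝ => ENNReal.ofReal r * H (t, r) := by fun_prop
    have : ∫⁻ p in polarCoord.target, ENNReal.ofReal p.1 •
        H (t, √((polarCoord.symm p).1 ^ 2 + (polarCoord.symm p).2 ^ 2)) =
        ∫⁻ p in Set.Ioi (0 : ℝ) ×ˢ Set.Ioo (-Real.pi) Real.pi, ENNReal.ofReal p.1 * H (t, p.1) := by
      rw [polarCoord_target]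
      refine setLIntegral_congr_fun (measurableSet_Ioi.prod measurableSet_Ioo) ?_
      rintro ⟨r, θ⟩ ⟨hr, -⟩
      have hr : 0 < r := hr
      have : (r * Real.cos θ) ^ 2 + (r * Real.sin θ) ^ 2 = r ^ 2 := by
        linear_combination r ^ 2 * Real.sin_sq_add_cos_sq θ
      simp only [polarCoord_symm_apply, this, Real.sqrt_sq hr.le, smul_eq_mul]
    rw [this, Measure.volume_eq_prod, ← Measure.prod_restrict,
      lintegral_prod (fun p : ℝ × ℝ => ENNReal.ofReal p.1 * H (t, p.1))
        (hm.comp measurable_fst).aemeasurable]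
    simp only [lintegral_const, Measure.restrict_apply MeasurableSet.univ, Set.univ_inter,
      Real.volume_Ioo]
    rw [lintegral_mul_const _ hm, mul_comm, ← lintegral_indicator measurableSet_Ioi]
    congr 1
    · congr 1; ring
    · refine lintegral_congr fun r => ?_
      by_cases h : 0 < r
      · rw [Set.indicator_of_mem (show r ∈ Set.Ioi 0 from h)]
      · rw [Set.indicator_of_notMem (show r ∉ Set.Ioi 0 from h), ENNReal.ofReal_of_nonpos (not_lt.1 h), zero_mul]
  simp only [e3]
  have hm2 : Measurable fun v : ℝ × ℝ => ENNReal.ofReal v.2 * H v := by fun_prop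
  rw [lintegral_const_mul _ hm2.lintegral_prod_right', Measure.volume_eq_prod,
    lintegral_prod _ hm2.aemeasurable]

lemma eG_nonneg {A B p q : ℝ} (hA : 0 < A) (hB : 0 < B) (hp : 0 ≤ p) (hq : 0 ≤ q) :
    0 ≤ eG A B p q := by
  unfold eG; positivity

lemma eG_scale (A B c p q : ℝ) (hc : c ≠ 0) : eG A B (c * p) (c * q) * c ^ 2 = eG A B p q := by
  have hd : dG A B (c * p) (c * q) = c ^ 3 * dG A B p q := by simp only [dG]; ring
  by_cases h : dG A B p q = 0
  · simp [eG, hd, h]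
  rw [eG, eG, hd]
  field_simp

lemma eG_cont {A B : ℝ} (hA : 0 < A) (hB : 0 < B) :
    Continuous fun θ : ℝ => eG A B (1 + Real.cos θ) (1 - Real.cos θ) := by
  have hd : ∀ θ : ℝ, dG A B (1 + Real.cos θ) (1 - Real.cos θ) ≠ 0 := fun θ =>
    (dG_pos hA hB (by linarith [Real.neg_one_le_cos θ]) (by linarith [Real.cos_le_one θ])
      (by linarith)).ne'
  unfold eG
  refine Continuous.div (by fun_prop) ?_ (fun θ => pow_ne_zero 2 (hd θ))
  unfold dG; fun_prop

lemma eG_int {A B : ℝ} (hA : 0 < A) (hB : 0 < B) :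
    ∫ θ in (0 : ℝ)..Real.pi, Real.sin θ * eG A B (1 + Real.cos θ) (1 - Real.cos θ) = 12 := by
  have hd : ∀ θ : ℝ, dG A B (1 + Real.cos θ) (1 - Real.cos θ) ≠ 0 := fun θ =>
    (dG_pos hA hB (by linarith [Real.neg_one_le_cos θ]) (by linarith [Real.cos_le_one θ])
      (by linarith)).ne'
  have key : ∀ θ ∈ Set.uIcc (0 : ℝ) Real.pi, HasDerivAt (fun θ : ℝ =>
      4 * (1 - Real.cos θ) * (A * (1 + Real.cos θ) ^ 2 +
        2 * B * (1 + Real.cos θ) * (1 - Real.cos θ) + A * B / 3 * (1 - Real.cos θ) ^ 2) /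
        dG A B (1 + Real.cos θ) (1 - Real.cos θ))
      (Real.sin θ * eG A B (1 + Real.cos θ) (1 - Real.cos θ)) θ := by
    intro θ _
    have hp : HasDerivAt (fun θ : ℝ => 1 + Real.cos θ) (-Real.sin θ) θ :=
      (Real.hasDerivAt_cos θ).const_add 1
    have hq : HasDerivAt (fun θ : ℝ => 1 - Real.cos θ) (Real.sin θ) θ := by
      simpa using (Real.hasDerivAt_cos θ).const_sub 1
    have hN := ((hq.const_mul 4).mul ((((hp.pow 2).const_mul A).add
      ((hp.const_mul (2 * B)).mul hq)).add ((hq.pow 2).const_mul (A * B / 3))))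
    have hD := (((hp.pow 3).add (((hp.pow 2).const_mul A).mul hq)).add
      ((hp.const_mul B).mul (hq.pow 2))).add ((hq.pow 3).const_mul (A * B / 9))
    have hQ := hN.div hD (hd θ)
    refine hQ.congr_deriv ?_
    simp only [Pi.add_apply, Pi.mul_apply, Pi.pow_apply]
    have hd2 := hd θ
    rw [eG]
    rw [← mul_div_assoc]
    unfold dG
    congr 1
    simp
    generalize Real.cos θ = c
    ring
  rw [intervalIntegral.integral_eq_sub_of_hasDerivAt key
    ((Real.continuous_sin.mul (eG_cont hA hB)).intervalIntegrable _ _)]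
  simp [dG]
  field_simp
  norm_num

lemma norm_cyl (x : E3) : ‖x‖ = √(x 2 ^ 2 + √(x 0 ^ 2 + x 1 ^ 2) ^ 2) := by
  rw [Real.sq_sqrt (by positivity), ← Real.sqrt_sq (norm_nonneg x)]
  congr 1
  linear_combination -normsq3 x

open scoped ENNReal in
def HH (A B : ℝ) (v : ℝ × ℝ) : ℝ≥0∞ :=
  {v : ℝ × ℝ | √(v.1 ^ 2 + v.2 ^ 2) < 1}.indicator (fun v => ENNReal.ofReal
    (eG A B (√(v.1 ^ 2 + v.2 ^ 2) + v.1) (√(v.1 ^ 2 + v.2 ^ 2) - v.1))) v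

lemma eG_meas (A B : ℝ) : Measurable fun v : ℝ × ℝ => eG A B v.1 v.2 := by
  unfold eG dG; fun_prop

lemma HH_meas (A B : ℝ) : Measurable (HH A B) := by
  refine Measurable.indicator ?_ (measurableSet_lt (by fun_prop) measurable_const)
  have h := (eG_meas A B).comp (g := fun v : ℝ × ℝ => eG A B v.1 v.2)
    (f := fun v : ℝ × ℝ => (√(v.1 ^ 2 + v.2 ^ 2) + v.1, √(v.1 ^ 2 + v.2 ^ 2) - v.1)) (by fun_prop)
  exact h.ennreal_ofReal

lemma HH_int {A B : ℝ} (hA : 0 < A) (hB : 0 < B) :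
    ∫⁻ v : ℝ × ℝ, ENNReal.ofReal v.2 * HH A B v = ENNReal.ofReal 12 := by
  rw [← lintegral_comp_polarCoord_symm, polarCoord_target]
  have hg : Measurable fun θ : ℝ =>
      ENNReal.ofReal (Real.sin θ * eG A B (1 + Real.cos θ) (1 - Real.cos θ)) :=
    (Real.continuous_sin.mul (eG_cont hA hB)).measurable.ennreal_ofReal
  have hi : Measurable ((Set.Iio (1 : ℝ)).indicator (fun _ => (1 : ENNReal))) :=
    measurable_const.indicator measurableSet_Iio
  have : ∫⁻ p in Set.Ioi (0 : ℝ) ×ˢ Set.Ioo (-Real.pi) Real.pi, ENNReal.ofReal p.1 •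
        (ENNReal.ofReal (polarCoord.symm p).2 * HH A B (polarCoord.symm p)) =
        ∫⁻ p in Set.Ioi (0 : ℝ) ×ˢ Set.Ioo (-Real.pi) Real.pi,
          (Set.Iio (1 : ℝ)).indicator (fun _ => (1 : ENNReal)) p.1 *
          ENNReal.ofReal (Real.sin p.2 * eG A B (1 + Real.cos p.2) (1 - Real.cos p.2)) := by
    refine setLIntegral_congr_fun (measurableSet_Ioi.prod measurableSet_Ioo) ?_
    rintro ⟨r, θ⟩ ⟨hr, -⟩
    have hr : 0 < r := hr
    have e : (r * Real.cos θ) ^ 2 + (r * Real.sin θ) ^ 2 = r ^ 2 := by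
      linear_combination r ^ 2 * Real.sin_sq_add_cos_sq θ
    have hp : 0 ≤ 1 + Real.cos θ := by linarith [Real.neg_one_le_cos θ]
    have hq : 0 ≤ 1 - Real.cos θ := by linarith [Real.cos_le_one θ]
    by_cases h1 : r < 1
    · have hm : (r * Real.cos θ, r * Real.sin θ) ∈ {v : ℝ × ℝ | √(v.1 ^ 2 + v.2 ^ 2) < 1} := by
        simp only [Set.mem_ofPred_eq, e, Real.sqrt_sq hr.le]; exact h1
      simp only [polarCoord_symm_apply, smul_eq_mul, HH]
      rw [Set.indicator_of_mem hm, Set.indicator_of_mem (show r ∈ Set.Iio 1 from h1), one_mul]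
      simp only [e, Real.sqrt_sq hr.le]
      have a1 : r + r * Real.cos θ = r * (1 + Real.cos θ) := by ring
      have a2 : r - r * Real.cos θ = r * (1 - Real.cos θ) := by ring
      rw [a1, a2, ← ENNReal.ofReal_mul' (eG_nonneg hA hB (by positivity) (by positivity)),
        ← ENNReal.ofReal_mul hr.le, ← eG_scale A B r (1 + Real.cos θ) (1 - Real.cos θ) hr.ne']
      congr 1; ring
    · have hm : (r * Real.cos θ, r * Real.sin θ) ∉ {v : ℝ × ℝ | √(v.1 ^ 2 + v.2 ^ 2) < 1} := by
        simp only [Set.mem_ofPred_eq, e, Real.sqrt_sq hr.le]; exact h1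
      simp only [polarCoord_symm_apply, smul_eq_mul, HH]
      rw [Set.indicator_of_notMem hm, Set.indicator_of_notMem (show r ∉ Set.Iio 1 from h1)]
      simp
  rw [this, Measure.volume_eq_prod, ← Measure.prod_restrict,
    lintegral_prod_mul hi.aemeasurable hg.aemeasurable]
  have i1 : ∫⁻ r in Set.Ioi (0 : ℝ), (Set.Iio (1 : ℝ)).indicator (fun _ => (1 : ENNReal)) r = 1 := by
    rw [lintegral_indicator measurableSet_Iio, Measure.restrict_restrict measurableSet_Iio]
    rw [Set.inter_comm, Set.Ioi_inter_Iio]; simp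
  have i2 : ∫⁻ θ in Set.Ioo (-Real.pi) Real.pi,
      ENNReal.ofReal (Real.sin θ * eG A B (1 + Real.cos θ) (1 - Real.cos θ)) =
      ∫⁻ θ in Set.Ioo 0 Real.pi,
      ENNReal.ofReal (Real.sin θ * eG A B (1 + Real.cos θ) (1 - Real.cos θ)) := by
    rw [← lintegral_indicator measurableSet_Ioo, ← lintegral_indicator measurableSet_Ioo]
    refine lintegral_congr fun θ => ?_
    by_cases h : θ ∈ Set.Ioo 0 Real.pi
    · rw [Set.indicator_of_mem h, Set.indicator_of_mem
        (show θ ∈ Set.Ioo (-Real.pi) Real.pi from ⟨by linarith [h.1, Real.pi_pos], h.2⟩)]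
    · rw [Set.indicator_of_notMem h]
      by_cases h' : θ ∈ Set.Ioo (-Real.pi) Real.pi
      · rw [Set.indicator_of_mem h']
        have h0 : θ ≤ 0 := by
          by_contra h3
          exact h ⟨not_le.1 h3, h'.2⟩
        refine ENNReal.ofReal_of_nonpos (mul_nonpos_of_nonpos_of_nonneg
          (Real.sin_nonpos_of_nonpos_of_neg_pi_le h0 h'.1.le)
          (eG_nonneg hA hB (by linarith [Real.neg_one_le_cos θ]) (by linarith [Real.cos_le_one θ])))
      · rw [Set.indicator_of_notMem h']
  rw [i1, i2, one_mul, ← eG_int hA hB, intervalIntegral.integral_of_le Real.pi_pos.le,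
    integral_Ioc_eq_integral_Ioo, ofReal_integral_eq_lintegral_ofReal]
  · exact (((Real.continuous_sin.mul (eG_cont hA hB)).integrableOn_Icc).mono_set
      Set.Ioo_subset_Icc_self)
  · refine (ae_restrict_iff' measurableSet_Ioo).2 (Filter.Eventually.of_forall fun θ h => ?_)
    exact mul_nonneg (Real.sin_nonneg_of_nonneg_of_le_pi h.1.le h.2.le)
          (eG_nonneg hA hB (by linarith [Real.neg_one_le_cos θ]) (by linarith [Real.cos_le_one θ]))

lemma energy_ae (μ1 μ2 : ℂ) (n1 : μ1 ≠ 0) (n2 : μ2 ≠ 0) :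
    ∀ᵐ x : E3, gradSq (homExt (omegaFam μ1 μ2)) x =
      eG (Complex.normSq μ1) (Complex.normSq μ2) (pP x) (qQ x) := by
  have h0 : ∀ᵐ x : E3, x ≠ 0 := by simp [ae_iff]
  filter_upwards [h0] with x hx
  exact (harm_gen μ1 μ2 n1 n2 (gen_homExt μ1 μ2 n1 n2) x hx).2

lemma HH_ball (A B : ℝ) (x : E3) : (Metric.ball (0 : E3) 1).indicator
      (fun x => ENNReal.ofReal (eG A B (pP x) (qQ x))) x =
      HH A B (x 2, √(x 0 ^ 2 + x 1 ^ 2)) := by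
  have hn := norm_cyl x
  unfold HH
  by_cases h : ‖x‖ < 1
  · have hm : (x 2, √(x 0 ^ 2 + x 1 ^ 2)) ∈ {v : ℝ × ℝ | √(v.1 ^ 2 + v.2 ^ 2) < 1} := by
      simp only [Set.mem_ofPred_eq]; rw [← hn]; exact h
    rw [Set.indicator_of_mem (by simpa using h), Set.indicator_of_mem hm]
    simp only [← hn, pP, qQ]
  · have hm : (x 2, √(x 0 ^ 2 + x 1 ^ 2)) ∉ {v : ℝ × ℝ | √(v.1 ^ 2 + v.2 ^ 2) < 1} := by
      simp only [Set.mem_ofPred_eq]; rw [← hn]; exact h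
    rw [Set.indicator_of_notMem (by simpa using h), Set.indicator_of_notMem hm]

lemma pP_meas : Measurable pP :=
  (measurable_norm.add (EuclideanSpace.proj (2 : Fin 3) : E3 →L[ℝ] ℝ).continuous.measurable)

lemma qQ_meas : Measurable qQ :=
  (measurable_norm.sub (EuclideanSpace.proj (2 : Fin 3) : E3 →L[ℝ] ℝ).continuous.measurable)

lemma eG_E3_meas (A B : ℝ) : Measurable fun x : E3 => eG A B (pP x) (qQ x) :=
  Measurable.comp (g := fun v : ℝ × ℝ => eG A B v.1 v.2) (f := fun x : E3 => (pP x, qQ x))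
    (eG_meas A B) (pP_meas.prodMk qQ_meas)

lemma eG_ball {A B : ℝ} (hA : 0 < A) (hB : 0 < B) :
    ∫ x in Metric.ball (0 : E3) 1, eG A B (pP x) (qQ x) = 24 * Real.pi := by
  have hnn : ∀ x : E3, 0 ≤ eG A B (pP x) (qQ x) := by
    intro x
    by_cases hx : x = 0
    · have h1 : pP x = 0 := by simp [hx, pP]
      have h2 : qQ x = 0 := by simp [hx, qQ]
      rw [h1, h2]
      exact eG_nonneg hA hB le_rfl le_rfl
    · obtain ⟨a, b, c⟩ := pq_quad x hx
      exact eG_nonneg hA hB a b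
  rw [integral_eq_lintegral_of_nonneg_ae (Filter.Eventually.of_forall hnn)
    (eG_E3_meas A B).aestronglyMeasurable, ← lintegral_indicator measurableSet_ball,
    lintegral_congr (HH_ball A B), cyl_coord (HH A B) (HH_meas A B), HH_int hA hB,
    ← ENNReal.ofReal_mul (by positivity), ENNReal.toReal_ofReal (by positivity)]
  ring

lemma energy (μ1 μ2 : ℂ) (n1 : μ1 ≠ 0) (n2 : μ2 ≠ 0) :
    ∫ x in Metric.ball (0 : E3) 1, gradSq (homExt (omegaFam μ1 μ2)) x = 24 * Real.pi := by
  rw [integral_congr_ae (ae_restrict_of_ae (energy_ae μ1 μ2 n1 n2))]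
  exact eG_ball (Complex.normSq_pos.mpr n1) (Complex.normSq_pos.mpr n2)

/-- The composition of the twistor fibration with the horizontal curve
(z₀³, μ₁z₀²z₁, μ₂z₀z₁², −μ₁μ₂z₁³/3) is given by the explicit formula; the resulting
map ω_{μ₁,μ₂} : S² → S⁴ is a smooth S¹-equivariant harmonic sphere sending the north
pole to (1,0,0); it is linearly full iff μ₁ ≠ 0 and μ₂ ≠ 0, in which case
∫_{B₁} |∇ŵ|² dx = 24π. -/
theorem statement8 (μ1 μ2 : ℂ) :
    (∀ z0 z1 : ℂ, ¬(z0 = 0 ∧ z1 = 0) → liftCurve μ1 μ2 z0 z1 = explicitFam μ1 μ2 z0 z1) ∧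
    IsHarmonicSphere (omegaFam μ1 μ2) ∧
    EquivariantS (omegaFam μ1 μ2) ∧
    omegaFam μ1 μ2 northPole = ((1 : ℝ), 0, 0) ∧
    (Submodule.span ℝ (omegaFam μ1 μ2 '' sphere2) = ⊤ ↔ (μ1 ≠ 0 ∧ μ2 ≠ 0)) ∧
    (μ1 * μ2 ≠ 0 →
      ∫ x in Metric.ball (0 : E3) 1, gradSq (homExt (omegaFam μ1 μ2)) x = 24 * Real.pi) := by
  exact ⟨fun z0 z1 _ => lift_eq μ1 μ2 z0 z1, all_harm μ1 μ2, all_equiv μ1 μ2, all_north μ1 μ2,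
    full_iff μ1 μ2, fun h => energy μ1 μ2 (left_ne_zero_of_mul h) (right_ne_zero_of_mul h)⟩
end
end
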